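/- Let s be an even integer with s ≥ 6, let N ≥ 2s, let 0 ≤ δ ≤ π/2, and let x,y ∈ SO(3) with ω(y⁻¹x) ≤ δ/(N+1). Then for all i,k ∈ {1,2,3}: |X_i^x X_i^x σ_N(x,y) − σ̃_N″(0)| ≤ (d̃_s/2)(N+1)²δ² and |X_i^x X_i^x X_k^y σ_N(x,y)| ≤ d̃_s((N+1)³δ + (1/4)(N+1)²δ²) + (c̃_s/4)(N+1)δ; and for i,j,n pairwise distinct: |X_j^x X_i^x σ_N(x,y) − (ε_{jin}/2)·X_n^x σ_N(x,y)| ≤ (d̃_s/4)(N+1)²δ², and for every k ∈ {i,j,n}: |X_j^x X_i^x X_k^y σ_N(x,y) − (ε_{jin}/2)·X_n^x X_k^y σ_N(x,y)| ≤ d̃_s((N+1)³δ + (1/4)(N+1)²δ²) + (c̃_s/4)(N+1)δ. -/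

import Mathlib

noncomputable section

abbrev Mat3 := Matrix (Fin 3) (Fin 3) ℝ

/-- membership in SO(3) -/
def IsSO3 (x : Mat3) : Prop := x.transpose * x = 1 ∧ x.det = 1

/-- rotation angle -/
def rotAngle (x : Mat3) : ℝ := Real.arccos ((Matrix.trace x - 1) / 2)

/-- generators of so(3) -/
def Lgen : Fin 3 → Mat3 :=
  ![!![0, 0, 0; 0, 0, -1; 0, 1, 0],
    !![0, 0, 1; 0, 0, 0; -1, 0, 0],
    !![0, -1, 0; 1, 0, 0; 0, 0, 0]]

/-- derivative in the first variable along generator `i` -/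
def Xx (i : Fin 3) (f : Mat3 → Mat3 → ℝ) : Mat3 → Mat3 → ℝ :=
  fun x y => deriv (fun t : ℝ => f (x * NormedSpace.exp (t • Lgen i)) y) 0

/-- derivative in the second variable along generator `i` -/
def Xy (i : Fin 3) (f : Mat3 → Mat3 → ℝ) : Mat3 → Mat3 → ℝ :=
  fun x y => deriv (fun t : ℝ => f x (y * NormedSpace.exp (t • Lgen i))) 0

/-- iterated integrals of the sign of the Chebyshev polynomial: the perfect B-spline chain -/
def fspline (s : ℕ) : ℕ → ℝ → ℝ
  | 0 => fun x => (-1 : ℝ) ^ (s - 1) * Real.sign ((Polynomial.Chebyshev.U ℝ ((s : ℤ) - 1)).eval x)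
  | (k + 1) => fun x => ∫ t in (-1 : ℝ)..x, fspline s k t

/-- the scaled perfect B-spline g̃_{s-1} -/
def gtilde (s : ℕ) (x : ℝ) : ℝ := fspline s (s - 1) (2 * x)

/-- discrete norm ‖g̃‖_{1,N} -/
def gnorm (s N : ℕ) : ℝ :=
  ∑ k ∈ Finset.Icc (-(N : ℤ)) (N : ℤ), gtilde s ((k : ℝ) / (2 * ((N : ℝ) + 1)))

/-- the trigonometric kernel σ̃_N (real-valued) -/
def sigmaT (s N : ℕ) (t : ℝ) : ℝ :=
  ((1 / (gnorm s N : ℂ)) *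
      ∑ k ∈ Finset.Icc (-(N : ℤ)) (N : ℤ),
        (gtilde s ((k : ℝ) / (2 * ((N : ℝ) + 1))) : ℂ) * Complex.exp ((k : ℂ) * t * Complex.I)).re

/-- the zonal kernel σ_N on SO(3) -/
def sigmaK (s N : ℕ) (x y : Mat3) : ℝ := sigmaT s N (rotAngle (y⁻¹ * x))

/-- rotation axis components -/
def axisComp : Fin 3 → Mat3 → ℝ :=
  ![fun x => (x 2 1 - x 1 2) / (2 * Real.sin (rotAngle x)),
    fun x => (x 0 2 - x 2 0) / (2 * Real.sin (rotAngle x)),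
    fun x => (x 1 0 - x 0 1) / (2 * Real.sin (rotAngle x))]

/-- Levi-Civita symbol on `Fin 3` -/
def eps3 (a b c : Fin 3) : ℝ :=
  if (a, b, c) = (0, 1, 2) ∨ (a, b, c) = (1, 2, 0) ∨ (a, b, c) = (2, 0, 1) then 1
  else if (a, b, c) = (2, 1, 0) ∨ (a, b, c) = (1, 0, 2) ∨ (a, b, c) = (0, 2, 1) then -1
  else 0

/-- constants c_{l,s} -/
def cConst : ℕ → ℕ → ℝ
  | 0, s => 1.02 * (Nat.factorial (s - 1)) * 2 ^ s * s
  | 1, s => 1.02 * (Nat.factorial (s - 1)) * 2 ^ s * (2 * s)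
  | 2, s => 1.02 * (Nat.factorial (s - 1)) * 2 ^ s * (4 * s + 1)
  | _, s => 1.02 * (Nat.factorial (s - 1)) * 2 ^ s * (9 * s - 2)

/-- ζ(m) for natural m -/
def zetaNat (m : ℕ) : ℝ := ∑' n : ℕ, (1 : ℝ) / ((n : ℝ) + 1) ^ m

/-- constants C_{i,s} = 124 c_{i,s} ζ(s-2) -/
def CConst (i s : ℕ) : ℝ := 124 * cConst i s * zetaNat (s - 2)

end

open scoped Real

section Rotations

attribute [local instance] Matrix.linftyOpNormedRing Matrix.linftyOpNormedAlgebra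

theorem Lgen_transpose (i : Fin 3) : (Lgen i).transpose = -Lgen i := by
  fin_cases i <;> ext a b <;> fin_cases a <;> fin_cases b <;> simp [Lgen]

theorem IsSO3.mul {x y : Mat3} (hx : IsSO3 x) (hy : IsSO3 y) : IsSO3 (x * y) := by
  refine ⟨?_, by rw [Matrix.det_mul, hx.2, hy.2, one_mul]⟩
  rw [Matrix.transpose_mul, Matrix.mul_assoc, ← Matrix.mul_assoc x.transpose, hx.1, one_mul, hy.1]

theorem IsSO3.mul_transpose {x : Mat3} (hx : IsSO3 x) : x * x.transpose = 1 :=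
  mul_eq_one_comm.mp hx.1

theorem IsSO3.transpose {x : Mat3} (hx : IsSO3 x) : IsSO3 x.transpose :=
  ⟨by rw [Matrix.transpose_transpose]; exact hx.mul_transpose, by rw [Matrix.det_transpose, hx.2]⟩

theorem IsSO3.inv_eq {x : Mat3} (hx : IsSO3 x) : x⁻¹ = x.transpose :=
  Matrix.inv_eq_left_inv hx.1

/-- The exponential of a skew-symmetric matrix is a rotation. -/
theorem isSO3_exp_of_transpose_eq_neg {A : Mat3} (hA : A.transpose = -A) :
    IsSO3 (NormedSpace.exp A) := by
  have key : ∀ B : Mat3, B.transpose = -B →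
      (NormedSpace.exp B).transpose * NormedSpace.exp B = 1 := by
    intro B hB
    rw [← Matrix.exp_transpose, hB,
      ← Matrix.exp_add_of_commute _ _ (Commute.neg_left (Commute.refl B))]
    simp
  refine ⟨key A hA, ?_⟩
  have hhalf : NormedSpace.exp A
      = NormedSpace.exp ((1 / 2 : ℝ) • A) * NormedSpace.exp ((1 / 2 : ℝ) • A) := by
    rw [← Matrix.exp_add_of_commute _ _ (Commute.refl _), ← add_smul]
    norm_num
  have h2 := congrArg Matrix.det (key ((1 / 2 : ℝ) • A) (by simp [hA]))
  rw [Matrix.det_mul, Matrix.det_transpose, Matrix.det_one] at h2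
  rw [hhalf, Matrix.det_mul, h2]

theorem isSO3_exp_smul_Lgen (i : Fin 3) (t : ℝ) : IsSO3 (NormedSpace.exp (t • Lgen i)) :=
  isSO3_exp_of_transpose_eq_neg (by rw [Matrix.transpose_smul, Lgen_transpose, smul_neg])

/-- Linear functionals along the one-parameter subgroups. -/
theorem hasDerivAt_trace_mul_exp_mul (A B : Mat3) (i : Fin 3) :
    HasDerivAt (fun t : ℝ => Matrix.trace (A * NormedSpace.exp (t • Lgen i) * B))
      (Matrix.trace (A * Lgen i * B)) 0 := by
  have h := hasDerivAt_exp_smul_const (𝕂 := ℝ) (Lgen i) (0 : ℝ)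
  rw [zero_smul, NormedSpace.exp_zero, one_mul] at h
  have h2 := (h.const_mul A).mul_const B
  exact (LinearMap.toContinuousLinearMap
    (Matrix.traceLinearMap (Fin 3) ℝ ℝ)).hasFDerivAt.comp_hasDerivAt (0 : ℝ) h2

theorem Xx_congr {f g : Mat3 → Mat3 → ℝ} (h : ∀ x y, IsSO3 x → IsSO3 y → f x y = g x y)
    (i : Fin 3) (x y : Mat3) (hx : IsSO3 x) (hy : IsSO3 y) : Xx i f x y = Xx i g x y := by
  unfold Xx
  congr 1
  funext t
  exact h _ _ (hx.mul (isSO3_exp_smul_Lgen i t)) hy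

theorem Xy_congr {f g : Mat3 → Mat3 → ℝ} (h : ∀ x y, IsSO3 x → IsSO3 y → f x y = g x y)
    (i : Fin 3) (x y : Mat3) (hx : IsSO3 x) (hy : IsSO3 y) : Xy i f x y = Xy i g x y := by
  unfold Xy
  congr 1
  funext t
  exact h _ _ hx (hy.mul (isSO3_exp_smul_Lgen i t))

/-- Derivative of `z ↦ tr (B z)` along `z = yᵀ x`, in the first variable. -/
theorem hasDerivAt_trace_first (B x y : Mat3) (i : Fin 3) :
    HasDerivAt (fun t : ℝ => Matrix.trace
        (B * (y.transpose * (x * NormedSpace.exp (t • Lgen i)))))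
      (Matrix.trace (B * (y.transpose * x) * Lgen i)) 0 := by
  have h := hasDerivAt_trace_mul_exp_mul (B * y.transpose * x) 1 i
  simpa only [Matrix.mul_assoc, mul_one] using h

/-- Derivative of `z ↦ tr z` along `z = yᵀ x`, in the second variable. -/
theorem hasDerivAt_trace_second (x y : Mat3) (i : Fin 3) :
    HasDerivAt (fun t : ℝ => Matrix.trace
        ((y * NormedSpace.exp (t • Lgen i)).transpose * x))
      (-Matrix.trace (Lgen i * (y.transpose * x))) 0 := by
  have h := hasDerivAt_trace_mul_exp_mul (x.transpose * y) 1 i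
  have e1 : ∀ A : Mat3, Matrix.trace (x.transpose * y * A * 1)
      = Matrix.trace ((y * A).transpose * x) := by
    intro A
    rw [← Matrix.trace_transpose]
    simp only [Matrix.transpose_mul, Matrix.transpose_transpose, mul_one, Matrix.mul_assoc]
  simp only [e1] at h
  convert h using 1
  rw [Matrix.transpose_mul, Lgen_transpose, neg_mul, neg_mul, Matrix.trace_neg, Matrix.mul_assoc]

end Rotations

section KernelDerivatives

open Polynomial

/-- The class function `P ((tr z - 1) / 2)`, `z = yᵀ x`. -/
noncomputable def polyKernel (P : ℝ[X]) (x y : Mat3) : ℝ :=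
  P.eval ((Matrix.trace (y.transpose * x) - 1) / 2)

theorem hasDerivAt_polyKernel_first (P : ℝ[X]) (x y : Mat3) (i : Fin 3) :
    HasDerivAt (fun t : ℝ => polyKernel P (x * NormedSpace.exp (t • Lgen i)) y)
      (polyKernel (derivative P) x y * (Matrix.trace (y.transpose * x * Lgen i) / 2)) 0 := by
  have h := hasDerivAt_trace_first 1 x y i
  simp only [one_mul] at h
  have h2 := (h.sub_const 1).div_const 2
  have h3 := HasDerivAt.comp (0 : ℝ) (P.hasDerivAt _) h2
  simpa [polyKernel, Function.comp_def] using h3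

theorem Xx_polyKernel (P : ℝ[X]) (i : Fin 3) :
    Xx i (polyKernel P) = fun x y =>
      polyKernel (derivative P) x y * (Matrix.trace (y.transpose * x * Lgen i) / 2) := by
  funext x y
  exact (hasDerivAt_polyKernel_first P x y i).deriv

theorem Xy_polyKernel (P : ℝ[X]) (k : Fin 3) :
    Xy k (polyKernel P) = fun x y =>
      polyKernel (derivative P) x y * (-Matrix.trace (Lgen k * (y.transpose * x)) / 2) := by
  funext x y
  have h2 := ((hasDerivAt_trace_second x y k).sub_const 1).div_const 2
  have h3 := HasDerivAt.comp (0 : ℝ) (P.hasDerivAt _) h2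
  have h4 := h3.deriv
  simpa [polyKernel, Function.comp_def, Xy] using h4

theorem Xx_polyKernel_mul_trace (P : ℝ[X]) (B C : Mat3) (i : Fin 3) (x y : Mat3) :
    HasDerivAt (fun t : ℝ => polyKernel P (x * NormedSpace.exp (t • Lgen i)) y *
        (Matrix.trace (B * (y.transpose * (x * NormedSpace.exp (t • Lgen i))) * C) / 2))
      (polyKernel (derivative P) x y * (Matrix.trace (y.transpose * x * Lgen i) / 2) *
          (Matrix.trace (B * (y.transpose * x) * C) / 2)
        + polyKernel P x y * (Matrix.trace (B * (y.transpose * x) * Lgen i * C) / 2)) 0 := by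
  have h1 := hasDerivAt_polyKernel_first P x y i
  have h2 := hasDerivAt_trace_mul_exp_mul (B * (y.transpose * x)) C i
  have h3 := h1.mul (h2.div_const 2)
  simpa [Matrix.mul_assoc, Pi.mul_def] using h3

theorem Xx_Xx_polyKernel (P : ℝ[X]) (i j : Fin 3) (x y : Mat3) :
    Xx j (Xx i (polyKernel P)) x y =
      polyKernel (derivative (derivative P)) x y * (Matrix.trace (y.transpose * x * Lgen j) / 2) *
          (Matrix.trace (y.transpose * x * Lgen i) / 2)
        + polyKernel (derivative P) x y *
          (Matrix.trace (y.transpose * x * Lgen j * Lgen i) / 2) := by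
  rw [Xx_polyKernel]
  have h := Xx_polyKernel_mul_trace (derivative P) 1 (Lgen i) j x y
  simp only [one_mul] at h
  exact h.deriv

theorem Xx_Xy_polyKernel (P : ℝ[X]) (i k : Fin 3) :
    Xx i (Xy k (polyKernel P)) = fun x y =>
      -(polyKernel (derivative (derivative P)) x y *
          (Matrix.trace (y.transpose * x * Lgen i) / 2) *
          (Matrix.trace (Lgen k * (y.transpose * x)) / 2)
        + polyKernel (derivative P) x y *
          (Matrix.trace (Lgen k * (y.transpose * x) * Lgen i) / 2)) := by
  funext x y
  rw [Xy_polyKernel]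
  have h := (Xx_polyKernel_mul_trace (derivative P) (Lgen k) 1 i x y).neg
  simp only [mul_one] at h
  convert h.deriv using 1
  unfold Xx
  congr 1
  funext t
  simp only [Pi.neg_apply]
  ring

theorem Xx_Xx_Xy_polyKernel (P : ℝ[X]) (i j k : Fin 3) (x y z : Mat3)
    (hz : z = y.transpose * x) :
    Xx j (Xx i (Xy k (polyKernel P))) x y =
      -(polyKernel (derivative (derivative (derivative P))) x y *
          (Matrix.trace (z * Lgen j) / 2) * (Matrix.trace (z * Lgen i) / 2) *
          (Matrix.trace (Lgen k * z) / 2)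
        + polyKernel (derivative (derivative P)) x y *
          ((Matrix.trace (z * Lgen j * Lgen i) / 2) * (Matrix.trace (Lgen k * z) / 2)
            + (Matrix.trace (z * Lgen i) / 2) * (Matrix.trace (Lgen k * z * Lgen j) / 2)
            + (Matrix.trace (z * Lgen j) / 2) * (Matrix.trace (Lgen k * z * Lgen i) / 2))
        + polyKernel (derivative P) x y * (Matrix.trace (Lgen k * z * Lgen j * Lgen i) / 2)) := by
  subst hz
  rw [Xx_Xy_polyKernel]
  have h1 := Xx_polyKernel_mul_trace (derivative (derivative P)) 1 (Lgen i) j x y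
  have h2 := hasDerivAt_trace_first (Lgen k) x y j
  have h3 := Xx_polyKernel_mul_trace (derivative P) (Lgen k) (Lgen i) j x y
  simp only [one_mul] at h1
  have h := ((h1.mul (h2.div_const 2)).add h3).neg
  refine (Eq.trans ?_ h.deriv).trans ?_
  · unfold Xx
    congr 1
  · simp
    ring

end KernelDerivatives

section RotationForm

/-- Rodrigues' form of a rotation with axis `n`, cosine `c` and sine `s` of the angle. -/
noncomputable def rodrigues (n : Fin 3 → ℝ) (c s : ℝ) : Mat3 :=
  !![c + (1 - c) * n 0 ^ 2, (1 - c) * (n 0 * n 1) - s * n 2, (1 - c) * (n 0 * n 2) + s * n 1;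
     (1 - c) * (n 0 * n 1) + s * n 2, c + (1 - c) * n 1 ^ 2, (1 - c) * (n 1 * n 2) - s * n 0;
     (1 - c) * (n 0 * n 2) - s * n 1, (1 - c) * (n 1 * n 2) + s * n 0, c + (1 - c) * n 2 ^ 2]

theorem IsSO3.adjugate_eq {z : Mat3} (hz : IsSO3 z) : z.adjugate = z.transpose := by
  have h : z.adjugate * z = 1 := by rw [Matrix.adjugate_mul, hz.2, one_smul]
  calc z.adjugate = z.adjugate * (z * z.transpose) := by rw [hz.mul_transpose, mul_one]
    _ = z.transpose := by rw [← Matrix.mul_assoc, h, one_mul]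

theorem IsSO3.exists_eq_rodrigues {z : Mat3} (hz : IsSO3 z) {c s : ℝ}
    (hc : (Matrix.trace z - 1) / 2 = c) (hc0 : 0 < 1 + c) (hs : s ^ 2 + c ^ 2 = 1) :
    ∃ n : Fin 3 → ℝ, n 0 ^ 2 + n 1 ^ 2 + n 2 ^ 2 = 1 ∧ z = rodrigues n c s := by
  have hadj := hz.adjugate_eq
  have hort := hz.1
  rw [Matrix.trace_fin_three] at hc
  have hA : ∀ i j, z.adjugate i j = z j i := fun i j => by rw [hadj, Matrix.transpose_apply]
  have hO : ∀ i j, (z.transpose * z) i j = (1 : Mat3) i j := fun i j => by rw [hort]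
  have hR : ∀ i j, (z * z.transpose) i j = (1 : Mat3) i j := fun i j => by rw [hz.mul_transpose]
  simp only [Matrix.adjugate_fin_three, Matrix.mul_apply, Fin.sum_univ_three,
    Matrix.transpose_apply] at hA hO hR
  have a00 := hA 0 0
  have a01 := hA 0 1
  have a02 := hA 0 2
  have a10 := hA 1 0
  have a11 := hA 1 1
  have a12 := hA 1 2
  have a20 := hA 2 0
  have a21 := hA 2 1
  have a22 := hA 2 2
  have o00 := hO 0 0
  have o01 := hO 0 1
  have o02 := hO 0 2
  have o11 := hO 1 1
  have o12 := hO 1 2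
  have o22 := hO 2 2
  have r00 := hR 0 0
  have r01 := hR 0 1
  have r02 := hR 0 2
  have r11 := hR 1 1
  have r12 := hR 1 2
  have r22 := hR 2 2
  simp at a00 a01 a02 a10 a11 a12 a20 a21 a22 o00 o01 o02 o11 o12 o22 r00 r01 r02 r11 r12 r22
  clear hA hO hR hadj hort
  obtain ⟨p, hp⟩ : ∃ p, p = (z 2 1 - z 1 2) / 2 := ⟨_, rfl⟩
  obtain ⟨q, hq⟩ : ∃ q, q = (z 0 2 - z 2 0) / 2 := ⟨_, rfl⟩
  obtain ⟨r, hr⟩ : ∃ r, r = (z 1 0 - z 0 1) / 2 := ⟨_, rfl⟩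
  have d0 : (1 + c) * (z 0 0 - c) = p ^ 2 := by
    rw [hp, ← hc]
    linear_combination (-o11 - o22 + r00 - 2 * a00) / 4
  have d1 : (1 + c) * (z 1 1 - c) = q ^ 2 := by
    rw [hq, ← hc]
    linear_combination (-o00 - o22 + r11 - 2 * a11) / 4
  have d2 : (1 + c) * (z 2 2 - c) = r ^ 2 := by
    rw [hr, ← hc]
    linear_combination (-o00 - o11 + r22 - 2 * a22) / 4
  have e01 : (1 + c) * ((z 0 1 + z 1 0) / 2) = p * q := by
    rw [hp, hq, ← hc]
    linear_combination (-a01 - a10 + r01 + o01) / 4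
  have e02 : (1 + c) * ((z 0 2 + z 2 0) / 2) = p * r := by
    rw [hp, hr, ← hc]
    linear_combination (-a02 - a20 + r02 + o02) / 4
  have e12 : (1 + c) * ((z 1 2 + z 2 1) / 2) = q * r := by
    rw [hq, hr, ← hc]
    linear_combination (-a12 - a21 + r12 + o12) / 4
  have hsum : p ^ 2 + q ^ 2 + r ^ 2 = s ^ 2 := by
    rw [← d0, ← d1, ← d2]
    linear_combination 2 * (1 + c) * hc - hs
  obtain ⟨n, hn, hn0, hn1, hn2⟩ : ∃ n : Fin 3 → ℝ, n 0 ^ 2 + n 1 ^ 2 + n 2 ^ 2 = 1 ∧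
      p = s * n 0 ∧ q = s * n 1 ∧ r = s * n 2 := by
    by_cases h0 : s = 0
    · rw [h0] at hsum
      refine ⟨![1, 0, 0], by simp, ?_, ?_, ?_⟩ <;> rw [h0, zero_mul, ← sq_eq_zero_iff] <;>
        linarith [sq_nonneg p, sq_nonneg q, sq_nonneg r]
    · refine ⟨![p / s, q / s, r / s], ?_, ?_, ?_, ?_⟩
      · simp
        field_simp
        exact hsum
      all_goals
        simp
        field_simp
  refine ⟨n, hn, ?_⟩
  have hs2 : s ^ 2 = (1 + c) * (1 - c) := by linear_combination hs
  have cancel : ∀ a b : ℝ, (1 + c) * a = (1 + c) * b → a = b :=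
    fun a b h => mul_left_cancel₀ hc0.ne' h
  have f0 := cancel (z 0 0 - c) ((1 - c) * n 0 ^ 2) (by rw [d0, hn0, mul_pow, hs2]; ring)
  have f1 := cancel (z 1 1 - c) ((1 - c) * n 1 ^ 2) (by rw [d1, hn1, mul_pow, hs2]; ring)
  have f2 := cancel (z 2 2 - c) ((1 - c) * n 2 ^ 2) (by rw [d2, hn2, mul_pow, hs2]; ring)
  have g01 := cancel ((z 0 1 + z 1 0) / 2) ((1 - c) * (n 0 * n 1))
    (by rw [e01, hn0, hn1]; linear_combination n 0 * n 1 * hs2)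
  have g02 := cancel ((z 0 2 + z 2 0) / 2) ((1 - c) * (n 0 * n 2))
    (by rw [e02, hn0, hn2]; linear_combination n 0 * n 2 * hs2)
  have g12 := cancel ((z 1 2 + z 2 1) / 2) ((1 - c) * (n 1 * n 2))
    (by rw [e12, hn1, hn2]; linear_combination n 1 * n 2 * hs2)
  ext a b
  fin_cases a <;> fin_cases b <;> simp [rodrigues] <;> linarith

end RotationForm

section TraceForms

/-- Second-order derivative of a class function at the rotation `z`, in terms of the first two
derivatives of its profile. -/
noncomputable def secondForm (z : Mat3) (F₁ F₂ : ℝ) (j i : Fin 3) : ℝ :=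
  F₂ * (Matrix.trace (z * Lgen j) / 2) * (Matrix.trace (z * Lgen i) / 2)
    + F₁ * (Matrix.trace (z * Lgen j * Lgen i) / 2)

/-- Mixed second-order derivative (once in each variable). -/
noncomputable def mixedForm (z : Mat3) (F₁ F₂ : ℝ) (i k : Fin 3) : ℝ :=
  -(F₂ * (Matrix.trace (z * Lgen i) / 2) * (Matrix.trace (Lgen k * z) / 2)
    + F₁ * (Matrix.trace (Lgen k * z * Lgen i) / 2))

/-- Third-order derivative (twice in the first variable, once in the second). -/
noncomputable def thirdForm (z : Mat3) (F₁ F₂ F₃ : ℝ) (j i k : Fin 3) : ℝ :=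
  -(F₃ * (Matrix.trace (z * Lgen j) / 2) * (Matrix.trace (z * Lgen i) / 2) *
      (Matrix.trace (Lgen k * z) / 2)
    + F₂ * ((Matrix.trace (z * Lgen j * Lgen i) / 2) * (Matrix.trace (Lgen k * z) / 2)
        + (Matrix.trace (z * Lgen i) / 2) * (Matrix.trace (Lgen k * z * Lgen j) / 2)
        + (Matrix.trace (z * Lgen j) / 2) * (Matrix.trace (Lgen k * z * Lgen i) / 2))
    + F₁ * (Matrix.trace (Lgen k * z * Lgen j * Lgen i) / 2))

variable {n : Fin 3 → ℝ} {c s : ℝ}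

theorem trace_rodrigues_mul_Lgen (i : Fin 3) :
    Matrix.trace (rodrigues n c s * Lgen i) / 2 = -(s * n i) := by
  fin_cases i <;> simp [rodrigues, Lgen, Matrix.trace_fin_three] <;> ring

theorem trace_Lgen_mul_rodrigues (i : Fin 3) :
    Matrix.trace (Lgen i * rodrigues n c s) / 2 = -(s * n i) := by
  rw [Matrix.trace_mul_comm, trace_rodrigues_mul_Lgen]

theorem trace_rodrigues_mul_Lgen_mul_Lgen (hn : n 0 ^ 2 + n 1 ^ 2 + n 2 ^ 2 = 1) (j i : Fin 3) :
    Matrix.trace (rodrigues n c s * Lgen j * Lgen i) / 2 =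
      (if i = j then -(1 + c) else
        -(s * (eps3 j i 0 * n 0 + eps3 j i 1 * n 1 + eps3 j i 2 * n 2))) / 2
        + (1 - c) * (n j * n i) / 2 := by
  fin_cases i <;> fin_cases j <;> simp [rodrigues, Lgen, eps3, Matrix.trace_fin_three] <;> first
      | linear_combination (-(1 - c) / 2) * hn | ring

theorem trace_Lgen_mul_rodrigues_mul_Lgen (hn : n 0 ^ 2 + n 1 ^ 2 + n 2 ^ 2 = 1) (k i : Fin 3) :
    Matrix.trace (Lgen k * rodrigues n c s * Lgen i) / 2 =
      (if i = k then -(1 + c) else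
        -(s * (eps3 i k 0 * n 0 + eps3 i k 1 * n 1 + eps3 i k 2 * n 2))) / 2
        + (1 - c) * (n i * n k) / 2 := by
  rw [Matrix.mul_assoc, Matrix.trace_mul_comm, trace_rodrigues_mul_Lgen_mul_Lgen hn]
  simp only [eq_comm]

/-- All distinct triples of indices. -/
theorem fin_three_distinct {i j m : Fin 3} (hij : i ≠ j) (hjm : j ≠ m) (him : i ≠ m) :
    (i = 0 ∧ j = 1 ∧ m = 2) ∨ (i = 1 ∧ j = 2 ∧ m = 0) ∨ (i = 2 ∧ j = 0 ∧ m = 1) ∨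
    (i = 2 ∧ j = 1 ∧ m = 0) ∨ (i = 1 ∧ j = 0 ∧ m = 2) ∨ (i = 0 ∧ j = 2 ∧ m = 1) := by
  revert i j m
  decide

variable {F₁ F₂ F₃ S : ℝ}

theorem secondForm_diag (hn : n 0 ^ 2 + n 1 ^ 2 + n 2 ^ 2 = 1) (i : Fin 3) :
    secondForm (rodrigues n c s) F₁ F₂ i i =
      n i ^ 2 * (s ^ 2 * F₂ - c * F₁) - (1 - n i ^ 2) * ((1 + c) / 2 * F₁) := by
  rw [secondForm, trace_rodrigues_mul_Lgen, trace_rodrigues_mul_Lgen_mul_Lgen hn, if_pos rfl]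
  ring

theorem secondForm_offDiag (hn : n 0 ^ 2 + n 1 ^ 2 + n 2 ^ 2 = 1) {i j m : Fin 3} (hij : i ≠ j)
    (hjm : j ≠ m) (him : i ≠ m) :
    secondForm (rodrigues n c s) F₁ F₂ j i
        - eps3 j i m / 2 * (F₁ * (Matrix.trace (rodrigues n c s * Lgen m) / 2)) =
      n i * n j * (s ^ 2 * F₂ + (1 - c) / 2 * F₁) := by
  rw [secondForm, trace_rodrigues_mul_Lgen, trace_rodrigues_mul_Lgen,
    trace_rodrigues_mul_Lgen_mul_Lgen hn, trace_rodrigues_mul_Lgen]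
  rcases fin_three_distinct hij hjm him with h | h | h | h | h | h <;>
    obtain ⟨rfl, rfl, rfl⟩ := h <;> simp [eps3] <;> ring

theorem thirdForm_same (hn : n 0 ^ 2 + n 1 ^ 2 + n 2 ^ 2 = 1)
    (hS : S = -(s ^ 3 * F₃) + 3 * (s * c * F₂) + s * F₁) (i : Fin 3) :
    thirdForm (rodrigues n c s) F₁ F₂ F₃ i i i =
      -(n i ^ 3 * S) + F₂ * s * ((1 + c) / 2 * (3 * (n i ^ 3 - n i)) + s * 0)
        + F₁ * (s * (n i ^ 3 - n i) + (1 - c) * 0) := by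
  rw [thirdForm, trace_rodrigues_mul_Lgen, trace_Lgen_mul_rodrigues,
    trace_rodrigues_mul_Lgen_mul_Lgen hn, trace_Lgen_mul_rodrigues_mul_Lgen hn, if_pos rfl, hS]
  have h : Matrix.trace (Lgen i * rodrigues n c s * Lgen i * Lgen i) / 2 = s * n i := by
    fin_cases i <;> simp [rodrigues, Lgen, Matrix.trace_fin_three] <;> ring
  rw [h]
  ring

theorem thirdForm_diag (hn : n 0 ^ 2 + n 1 ^ 2 + n 2 ^ 2 = 1)
    (hS : S = -(s ^ 3 * F₃) + 3 * (s * c * F₂) + s * F₁) {i k m : Fin 3} (hik : i ≠ k)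
    (hkm : k ≠ m) (him : i ≠ m) :
    thirdForm (rodrigues n c s) F₁ F₂ F₃ i i k =
      -(n i ^ 2 * n k * S) + F₂ * s * ((1 + c) / 2 * ((3 * n i ^ 2 - 1) * n k)
          + s * (-eps3 i k m * (n i * n m)))
        + F₁ * (s * ((n i ^ 2 - 1 / 2) * n k) + (1 - c) * (-eps3 i k m / 2 * (n i * n m))) := by
  rw [thirdForm, trace_rodrigues_mul_Lgen, trace_Lgen_mul_rodrigues,
    trace_rodrigues_mul_Lgen_mul_Lgen hn, trace_Lgen_mul_rodrigues_mul_Lgen hn, if_pos rfl, hS]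
  have h : Matrix.trace (Lgen k * rodrigues n c s * Lgen i * Lgen i) / 2 =
      s * n k / 2 + (1 - c) * (eps3 i k m / 2 * (n i * n m)) := by
    rcases fin_three_distinct hik hkm him with h | h | h | h | h | h <;>
      obtain ⟨rfl, rfl, rfl⟩ := h <;>
      simp [rodrigues, Lgen, eps3, Matrix.trace_fin_three] <;> ring
  rw [h]
  rcases fin_three_distinct hik hkm him with h | h | h | h | h | h <;>
    obtain ⟨rfl, rfl, rfl⟩ := h <;> simp [eps3] <;> ring

theorem thirdForm_offDiag_left (hn : n 0 ^ 2 + n 1 ^ 2 + n 2 ^ 2 = 1)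
    (hS : S = -(s ^ 3 * F₃) + 3 * (s * c * F₂) + s * F₁) {i j m : Fin 3} (hij : i ≠ j)
    (hjm : j ≠ m) (him : i ≠ m) :
    thirdForm (rodrigues n c s) F₁ F₂ F₃ j i i
        - eps3 j i m / 2 * mixedForm (rodrigues n c s) F₁ F₂ m i =
      -(n i ^ 2 * n j * S) + F₂ * s * ((1 + c) / 2 * ((3 * n i ^ 2 - 1) * n j)
          + s * (-eps3 j i m / 2 * (n i * n m)))
        + F₁ * (s * ((n i ^ 2 - 1 / 4) * n j) + (1 - c) * (-eps3 j i m / 4 * (n i * n m))) := by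
  rw [thirdForm, mixedForm]
  simp only [trace_rodrigues_mul_Lgen, trace_Lgen_mul_rodrigues,
    trace_rodrigues_mul_Lgen_mul_Lgen hn, trace_Lgen_mul_rodrigues_mul_Lgen hn, hS]
  have h : Matrix.trace (Lgen i * rodrigues n c s * Lgen j * Lgen i) / 2 =
      s * n j / 2 + (1 - c) * (eps3 j i m / 2 * (n i * n m)) := by
    rcases fin_three_distinct hij hjm him with h | h | h | h | h | h <;>
      obtain ⟨rfl, rfl, rfl⟩ := h <;>
      simp [rodrigues, Lgen, eps3, Matrix.trace_fin_three] <;> ring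
  rw [h]
  rcases fin_three_distinct hij hjm him with h | h | h | h | h | h <;>
    obtain ⟨rfl, rfl, rfl⟩ := h <;> simp [eps3] <;> ring

theorem thirdForm_offDiag_right (hn : n 0 ^ 2 + n 1 ^ 2 + n 2 ^ 2 = 1)
    (hS : S = -(s ^ 3 * F₃) + 3 * (s * c * F₂) + s * F₁) {i j m : Fin 3} (hij : i ≠ j)
    (hjm : j ≠ m) (him : i ≠ m) :
    thirdForm (rodrigues n c s) F₁ F₂ F₃ j i j
        - eps3 j i m / 2 * mixedForm (rodrigues n c s) F₁ F₂ m j =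
      -(n j ^ 2 * n i * S) + F₂ * s * ((1 + c) / 2 * ((3 * n j ^ 2 - 1) * n i)
          + s * (eps3 j i m / 2 * (n j * n m)))
        + F₁ * (s * ((n j ^ 2 - 1 / 4) * n i) + (1 - c) * (eps3 j i m / 4 * (n j * n m))) := by
  rw [thirdForm, mixedForm]
  simp only [trace_rodrigues_mul_Lgen, trace_Lgen_mul_rodrigues,
    trace_rodrigues_mul_Lgen_mul_Lgen hn, trace_Lgen_mul_rodrigues_mul_Lgen hn, hS]
  have h : Matrix.trace (Lgen j * rodrigues n c s * Lgen j * Lgen i) / 2 = 0 := by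
    rcases fin_three_distinct hij hjm him with h | h | h | h | h | h <;>
      obtain ⟨rfl, rfl, rfl⟩ := h <;>
      simp [rodrigues, Lgen, Matrix.trace_fin_three]
  rw [h]
  rcases fin_three_distinct hij hjm him with h | h | h | h | h | h <;>
    obtain ⟨rfl, rfl, rfl⟩ := h <;> simp [eps3] <;> ring

theorem thirdForm_offDiag_third (hn : n 0 ^ 2 + n 1 ^ 2 + n 2 ^ 2 = 1)
    (hS : S = -(s ^ 3 * F₃) + 3 * (s * c * F₂) + s * F₁) {i j m : Fin 3} (hij : i ≠ j)
    (hjm : j ≠ m) (him : i ≠ m) :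
    thirdForm (rodrigues n c s) F₁ F₂ F₃ j i m
        - eps3 j i m / 2 * mixedForm (rodrigues n c s) F₁ F₂ m m =
      -(n i * n j * n m * S) + F₂ * s * ((1 + c) / 2 * (3 * (n i * n j * n m))
          + s * (eps3 j i m / 2 * (n i ^ 2 - n j ^ 2)))
        + F₁ * (s * (n i * n j * n m) + (1 - c) * (eps3 j i m / 4 * (n i ^ 2 - n j ^ 2))) := by
  rw [thirdForm, mixedForm]
  simp only [trace_rodrigues_mul_Lgen, trace_Lgen_mul_rodrigues,
    trace_rodrigues_mul_Lgen_mul_Lgen hn, trace_Lgen_mul_rodrigues_mul_Lgen hn, hS]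
  have h : Matrix.trace (Lgen m * rodrigues n c s * Lgen j * Lgen i) / 2 =
      -(eps3 j i m / 2 * (c + (1 - c) * n i ^ 2)) := by
    rcases fin_three_distinct hij hjm him with h | h | h | h | h | h <;>
      obtain ⟨rfl, rfl, rfl⟩ := h <;>
      simp [rodrigues, Lgen, eps3, Matrix.trace_fin_three] <;> ring
  rw [h]
  rcases fin_three_distinct hij hjm him with h | h | h | h | h | h <;>
    obtain ⟨rfl, rfl, rfl⟩ := h <;> simp [eps3] <;>
    first
      | linear_combination (F₁ * (1 - c) / 4) * hn
      | linear_combination (-(F₁ * (1 - c) / 4)) * hn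

end TraceForms

section FormBounds

theorem abs_third_order_shape_le {s t c A₂ A₄ F₁ F₂ S α β γ κ ρ : ℝ} (hs0 : 0 ≤ s) (hst : s ≤ t)
    (hc0 : 0 ≤ c) (hc1 : c ≤ 1) (hct : 1 - c ≤ t ^ 2 / 2) (hA₂ : 0 ≤ A₂) (hA₄ : A₂ ≤ A₄)
    (hF₁ : |F₁| ≤ A₂) (hF₂ : |F₂| ≤ (A₄ - A₂) / 3) (hS : |S| ≤ A₄ * t)
    (hαβ : |α| + |β| / 3 ≤ 1) (hκ : |κ| ≤ |β| / 3 + 1 / 4) (hγ : |γ| ≤ 3 / 4) (hρ : |ρ| ≤ 1 / 2) :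
    |(-(α * S) + F₂ * s * ((1 + c) / 2 * β + s * γ) + F₁ * (s * κ + (1 - c) * ρ))|
      ≤ A₄ * t + 1 / 4 * (A₄ * t ^ 2) + 1 / 4 * (A₂ * t) := by
  have ht : 0 ≤ t := hs0.trans hst
  have h1 : |α * S| ≤ |α| * (A₄ * t) := by
    rw [abs_mul]; gcongr
  have h2 : |(1 + c) / 2 * β + s * γ| ≤ |β| + t * (3 / 4) := by
    refine (abs_add_le _ _).trans (add_le_add ?_ ?_)
    · rw [abs_mul, abs_of_nonneg (by linarith)]
      exact mul_le_of_le_one_left (abs_nonneg _) (by linarith)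
    · rw [abs_mul, abs_of_nonneg hs0]; gcongr
  have h3 : |F₂ * s * ((1 + c) / 2 * β + s * γ)| ≤ (A₄ - A₂) / 3 * t * (|β| + t * (3 / 4)) := by
    rw [abs_mul, abs_mul, abs_of_nonneg hs0]
    have : 0 ≤ (A₄ - A₂) / 3 := by linarith
    gcongr
  have h4 : |s * κ + (1 - c) * ρ| ≤ t * (|β| / 3 + 1 / 4) + t ^ 2 / 2 * (1 / 2) := by
    refine (abs_add_le _ _).trans (add_le_add ?_ ?_)
    · rw [abs_mul, abs_of_nonneg hs0]; gcongr
    · rw [abs_mul, abs_of_nonneg (by linarith : (0 : ℝ) ≤ 1 - c)]; gcongr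
  have h5 : |F₁ * (s * κ + (1 - c) * ρ)| ≤
      A₂ * (t * (|β| / 3 + 1 / 4) + t ^ 2 / 2 * (1 / 2)) := by
    rw [abs_mul]; gcongr
  have h6 : (|α| + |β| / 3) * (A₄ * t) ≤ 1 * (A₄ * t) := by
    have : 0 ≤ A₄ := hA₂.trans hA₄
    gcongr
  refine (abs_add_three _ _ _).trans ?_
  rw [abs_neg]
  linarith

theorem abs_eps3_le (a b c : Fin 3) : |eps3 a b c| ≤ 1 := by
  unfold eps3
  split_ifs <;> simp

theorem abs_mul_le_of_abs_le_one {e x B : ℝ} (he : |e| ≤ 1) (hx : |x| ≤ B) : |e * x| ≤ B := by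
  rw [abs_mul]
  exact (mul_le_of_le_one_left (abs_nonneg _) he).trans hx

theorem abs_mul_le_half {a b : ℝ} (h : a ^ 2 + b ^ 2 ≤ 1) : |a * b| ≤ 1 / 2 := by
  rw [abs_le]
  constructor <;> nlinarith [sq_nonneg (a + b), sq_nonneg (a - b)]

/-- The coefficients of the third-order forms with a repeated index. -/
theorem abs_sq_mul_add_le {p q : ℝ} (h : p ^ 2 + q ^ 2 ≤ 1) :
    |p ^ 2 * q| + |(3 * p ^ 2 - 1) * q| / 3 ≤ 1 := by
  have hq : |q| ≤ 1 - p ^ 2 / 2 := by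
    rw [abs_le]
    constructor <;> nlinarith [sq_nonneg (q + 1), sq_nonneg (q - 1)]
  rw [abs_mul, abs_mul, abs_of_nonneg (sq_nonneg p)]
  have hp : p ^ 2 ≤ 1 := by nlinarith [sq_nonneg q]
  rcases abs_cases (3 * p ^ 2 - 1) with h' | h'
  · rw [h'.1]
    nlinarith [mul_le_mul_of_nonneg_left hq (by linarith : 0 ≤ 2 * p ^ 2 - 1 / 3),
      sq_nonneg (p ^ 2 - 13 / 12)]
  · rw [h'.1]
    nlinarith [sq_nonneg p]

theorem abs_le_of_sq_le {q : ℝ} (h : q ^ 2 ≤ 1) : |q| ≤ 1 := by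
  rw [← sq_abs] at h
  nlinarith [abs_nonneg q]

theorem abs_sq_sub_mul_le {p q e : ℝ} (he : |1 / 3 - e| ≤ 1 / 4) (hq : |q| ≤ 1) :
    |(p ^ 2 - e) * q| ≤ |(3 * p ^ 2 - 1) * q| / 3 + 1 / 4 := by
  have h : (p ^ 2 - e) * q = (3 * p ^ 2 - 1) * q / 3 + (1 / 3 - e) * q := by ring
  rw [h]
  refine (abs_add_le _ _).trans (add_le_add ?_ ?_)
  · rw [abs_div, abs_of_pos (by norm_num : (0 : ℝ) < 3)]
  · rw [abs_mul]
    nlinarith [abs_nonneg q, abs_nonneg (1 / 3 - e)]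

theorem abs_mul_mul_le_half {p q r : ℝ} (h : p ^ 2 + q ^ 2 + r ^ 2 = 1) :
    |p * q * r| ≤ 1 / 2 := by
  have h1 : |p * q| ≤ 1 / 2 := abs_mul_le_half (by nlinarith [sq_nonneg r])
  have h2 : |r| ≤ 1 := abs_le_of_sq_le (by nlinarith [sq_nonneg p, sq_nonneg q])
  rw [abs_mul]
  nlinarith [abs_nonneg (p * q), abs_nonneg r]

theorem sum_sq_of_distinct {n : Fin 3 → ℝ} (hn : n 0 ^ 2 + n 1 ^ 2 + n 2 ^ 2 = 1) {i j m : Fin 3}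
    (hij : i ≠ j) (hjm : j ≠ m) (him : i ≠ m) : n i ^ 2 + n j ^ 2 + n m ^ 2 = 1 := by
  rcases fin_three_distinct hij hjm him with h | h | h | h | h | h <;>
    obtain ⟨rfl, rfl, rfl⟩ := h <;> linarith

theorem sq_le_one_of_sum_sq {n : Fin 3 → ℝ} (hn : n 0 ^ 2 + n 1 ^ 2 + n 2 ^ 2 = 1) (i : Fin 3) :
    n i ^ 2 ≤ 1 := by
  fin_cases i <;> dsimp <;> nlinarith [sq_nonneg (n 0), sq_nonneg (n 1), sq_nonneg (n 2)]

/-- Size information on the first three derivatives of a profile at `c = cos t`, `s = sin t`. -/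
structure ProfileBounds (s t c A₂ A₄ F₁ F₂ F₃ : ℝ) : Prop where
  sin_nonneg : 0 ≤ s
  sin_le : s ≤ t
  cos_nonneg : 0 ≤ c
  cos_le_one : c ≤ 1
  one_sub_cos_le : 1 - c ≤ t ^ 2 / 2
  A₂_nonneg : 0 ≤ A₂
  A₂_le : A₂ ≤ A₄
  abs_first_le : |F₁| ≤ A₂
  abs_second_le : |F₂| ≤ (A₄ - A₂) / 3
  sub_first_le : A₂ - F₁ ≤ (A₄ - A₂) / 3 * (1 - c)
  second_angle_mem : s ^ 2 * F₂ - c * F₁ + A₂ ∈ Set.Icc 0 (A₄ * t ^ 2 / 2)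
  third_angle_le : |-(s ^ 3 * F₃) + 3 * (s * c * F₂) + s * F₁| ≤ A₄ * t

variable {n : Fin 3 → ℝ} {s t c A₂ A₄ F₁ F₂ F₃ : ℝ}

theorem ProfileBounds.abs_secondForm_diag_le (h : ProfileBounds s t c A₂ A₄ F₁ F₂ F₃)
    (hn : n 0 ^ 2 + n 1 ^ 2 + n 2 ^ 2 = 1) (i : Fin 3) :
    |secondForm (rodrigues n c s) F₁ F₂ i i + A₂| ≤ A₄ * t ^ 2 / 2 := by
  rw [secondForm_diag hn]
  have hi := sq_le_one_of_sum_sq hn i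
  obtain ⟨h1, h2⟩ := h.second_angle_mem
  have hF := abs_le.1 h.abs_first_le
  have hA := h.A₂_nonneg
  have hA' := h.A₂_le
  have hc0 := h.cos_nonneg
  have hc1 := h.cos_le_one
  have hct := h.one_sub_cos_le
  have h3 : 0 ≤ A₂ - (1 + c) / 2 * F₁ := by nlinarith
  have h4 : A₂ - (1 + c) / 2 * F₁ ≤ A₄ * t ^ 2 / 2 := by
    have e1 : A₂ - (1 + c) / 2 * F₁ = (1 + c) / 2 * (A₂ - F₁) + (1 - c) / 2 * A₂ := by ring
    have e2 : (1 + c) / 2 * (A₂ - F₁) ≤ 1 * (A₂ - F₁) := by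
      gcongr
      · linarith
      · linarith
    have e3 := h.sub_first_le
    have e4 : ((A₄ - A₂) / 3 + A₂ / 2) * (1 - c) ≤ A₄ * (1 - c) := by
      gcongr
      linarith
    have e5 : A₄ * (1 - c) ≤ A₄ * (t ^ 2 / 2) := by
      gcongr; linarith
    nlinarith
  have e : n i ^ 2 * (s ^ 2 * F₂ - c * F₁) - (1 - n i ^ 2) * ((1 + c) / 2 * F₁) + A₂ =
      n i ^ 2 * (s ^ 2 * F₂ - c * F₁ + A₂) + (1 - n i ^ 2) * (A₂ - (1 + c) / 2 * F₁) := by ring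
  rw [e, abs_of_nonneg (add_nonneg (mul_nonneg (sq_nonneg _) h1)
    (mul_nonneg (by linarith) h3))]
  nlinarith [mul_le_mul_of_nonneg_left h2 (sq_nonneg (n i)),
    mul_le_mul_of_nonneg_left h4 (by linarith : (0 : ℝ) ≤ 1 - n i ^ 2)]

theorem ProfileBounds.abs_secondForm_offDiag_le (h : ProfileBounds s t c A₂ A₄ F₁ F₂ F₃)
    (hn : n 0 ^ 2 + n 1 ^ 2 + n 2 ^ 2 = 1) {i j m : Fin 3} (hij : i ≠ j)
    (hjm : j ≠ m) (him : i ≠ m) :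
    |secondForm (rodrigues n c s) F₁ F₂ j i
        - eps3 j i m / 2 * (F₁ * (Matrix.trace (rodrigues n c s * Lgen m) / 2))|
      ≤ A₄ * t ^ 2 / 4 := by
  rw [secondForm_offDiag hn hij hjm him]
  have hsum := sum_sq_of_distinct hn hij hjm him
  have h1 : |n i * n j| ≤ 1 / 2 := abs_mul_le_half (by nlinarith [sq_nonneg (n m)])
  have hA := h.A₂_nonneg
  have hA' := h.A₂_le
  have hs0 := h.sin_nonneg
  have hst := h.sin_le
  have hc1 := h.cos_le_one
  have hct := h.one_sub_cos_le
  have hF₁ := h.abs_first_le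
  have hF₂ := h.abs_second_le
  have h2 : |s ^ 2 * F₂ + (1 - c) / 2 * F₁| ≤ t ^ 2 * ((A₄ - A₂) / 3) + t ^ 2 / 2 / 2 * A₂ := by
    refine (abs_add_le _ _).trans (add_le_add ?_ ?_)
    · rw [abs_mul, abs_of_nonneg (sq_nonneg s)]
      gcongr
    · rw [abs_mul, abs_of_nonneg (by linarith : 0 ≤ (1 - c) / 2)]
      gcongr
  rw [abs_mul]
  have h3 : |n i * n j| * |s ^ 2 * F₂ + (1 - c) / 2 * F₁| ≤
      1 / 2 * (t ^ 2 * ((A₄ - A₂) / 3) + t ^ 2 / 2 / 2 * A₂) := by gcongr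
  nlinarith [mul_nonneg (sq_nonneg t) (sub_nonneg.2 hA'), mul_nonneg (sq_nonneg t) hA]

theorem ProfileBounds.abs_third_order_shape_le (h : ProfileBounds s t c A₂ A₄ F₁ F₂ F₃)
    {α β γ κ ρ : ℝ} (hαβ : |α| + |β| / 3 ≤ 1) (hκ : |κ| ≤ |β| / 3 + 1 / 4) (hγ : |γ| ≤ 3 / 4)
    (hρ : |ρ| ≤ 1 / 2) :
    |(-(α * (-(s ^ 3 * F₃) + 3 * (s * c * F₂) + s * F₁))
        + F₂ * s * ((1 + c) / 2 * β + s * γ) + F₁ * (s * κ + (1 - c) * ρ))|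
      ≤ A₄ * t + 1 / 4 * (A₄ * t ^ 2) + 1 / 4 * (A₂ * t) :=
  _root_.abs_third_order_shape_le h.sin_nonneg h.sin_le h.cos_nonneg h.cos_le_one
    h.one_sub_cos_le h.A₂_nonneg h.A₂_le h.abs_first_le h.abs_second_le h.third_angle_le
    hαβ hκ hγ hρ

theorem ProfileBounds.abs_thirdForm_diag_le (h : ProfileBounds s t c A₂ A₄ F₁ F₂ F₃)
    (hn : n 0 ^ 2 + n 1 ^ 2 + n 2 ^ 2 = 1) (i k : Fin 3) :
    |thirdForm (rodrigues n c s) F₁ F₂ F₃ i i k|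
      ≤ A₄ * t + 1 / 4 * (A₄ * t ^ 2) + 1 / 4 * (A₂ * t) := by
  have hi := sq_le_one_of_sum_sq hn i
  by_cases hik : i = k
  · subst hik
    rw [thirdForm_same hn rfl]
    have hi' := abs_le_of_sq_le hi
    have e1 : |n i ^ 3| = |n i| * n i ^ 2 := by
      rw [pow_succ, abs_mul, abs_of_nonneg (sq_nonneg (n i)), mul_comm]
    have e2 : |n i ^ 3 - n i| = |n i| * (1 - n i ^ 2) := by
      rw [show n i ^ 3 - n i = -(n i * (1 - n i ^ 2)) by ring, abs_neg, abs_mul,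
        abs_of_nonneg (sub_nonneg.2 hi)]
    have e3 : |3 * (n i ^ 3 - n i)| = 3 * (|n i| * (1 - n i ^ 2)) := by
      rw [abs_mul, e2, abs_of_pos (by norm_num : (0 : ℝ) < 3)]
    refine h.abs_third_order_shape_le ?_ ?_ ?_ ?_
    · rw [e1, e3]; nlinarith
    · rw [e2, e3]; linarith
    · norm_num
    · norm_num
  · obtain ⟨m, hkm, him⟩ : ∃ m, k ≠ m ∧ i ≠ m := by
      clear hi
      revert i k; decide
    have hsum := sum_sq_of_distinct hn hik hkm him
    rw [thirdForm_diag hn rfl hik hkm him]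
    have hk := abs_le_of_sq_le (sq_le_one_of_sum_sq hn k)
    have hm : |n i * n m| ≤ 1 / 2 := abs_mul_le_half (by nlinarith [sq_nonneg (n k)])
    have he : |-eps3 i k m| ≤ 1 := by rw [abs_neg]; exact abs_eps3_le _ _ _
    refine h.abs_third_order_shape_le (abs_sq_mul_add_le (by nlinarith [sq_nonneg (n m)]))
      (abs_sq_sub_mul_le (by norm_num [abs_le]) hk) ?_ ?_
    · exact abs_mul_le_of_abs_le_one he (hm.trans (by norm_num))
    · exact abs_mul_le_of_abs_le_one 
        (by rw [abs_div, abs_neg]; norm_num; linarith [abs_eps3_le i k m]) hm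

theorem ProfileBounds.abs_thirdForm_offDiag_le (h : ProfileBounds s t c A₂ A₄ F₁ F₂ F₃)
    (hn : n 0 ^ 2 + n 1 ^ 2 + n 2 ^ 2 = 1) {i j m : Fin 3} (hij : i ≠ j)
    (hjm : j ≠ m) (him : i ≠ m) {k : Fin 3} (hk : k = i ∨ k = j ∨ k = m) :
    |thirdForm (rodrigues n c s) F₁ F₂ F₃ j i k
        - eps3 j i m / 2 * mixedForm (rodrigues n c s) F₁ F₂ m k|
      ≤ A₄ * t + 1 / 4 * (A₄ * t ^ 2) + 1 / 4 * (A₂ * t) := by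
  have hsum := sum_sq_of_distinct hn hij hjm him
  have he := abs_eps3_le j i m
  have hi := abs_le_of_sq_le (sq_le_one_of_sum_sq hn i)
  have hj := abs_le_of_sq_le (sq_le_one_of_sum_sq hn j)
  rcases hk with rfl | rfl | rfl
  · rw [thirdForm_offDiag_left hn rfl hij hjm him]
    have hm : |n k * n m| ≤ 1 / 2 := abs_mul_le_half (by nlinarith [sq_nonneg (n j)])
    refine h.abs_third_order_shape_le (abs_sq_mul_add_le (by nlinarith [sq_nonneg (n m)]))
      (abs_sq_sub_mul_le (by norm_num [abs_le]) hj) ?_ ?_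
    · exact abs_mul_le_of_abs_le_one (by rw [abs_div, abs_neg]; norm_num; linarith)
        (hm.trans (by norm_num))
    · exact abs_mul_le_of_abs_le_one (by rw [abs_div, abs_neg]; norm_num; linarith) hm
  · rw [thirdForm_offDiag_right hn rfl hij hjm him]
    have hm : |n k * n m| ≤ 1 / 2 := abs_mul_le_half (by nlinarith [sq_nonneg (n i)])
    refine h.abs_third_order_shape_le (abs_sq_mul_add_le (by nlinarith [sq_nonneg (n m)]))
      (abs_sq_sub_mul_le (by norm_num [abs_le]) hi) ?_ ?_
    · exact abs_mul_le_of_abs_le_one (by rw [abs_div]; norm_num; linarith) (hm.trans (by norm_num))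
    · exact abs_mul_le_of_abs_le_one (by rw [abs_div]; norm_num; linarith) hm
  · rw [thirdForm_offDiag_third hn rfl hij hjm him]
    have hp := abs_mul_mul_le_half hsum
    have hd : |n i ^ 2 - n j ^ 2| ≤ 1 := by
      rw [abs_le]
      constructor <;> nlinarith [sq_nonneg (n i), sq_nonneg (n j), sq_nonneg (n k)]
    refine h.abs_third_order_shape_le ?_ ?_ ?_ ?_
    · rw [abs_mul (3 : ℝ), abs_of_pos (by norm_num : (0 : ℝ) < 3)]; linarith
    · rw [abs_mul (3 : ℝ)]; norm_num
    · rw [abs_mul, abs_div]; norm_num; nlinarith [abs_nonneg (n i ^ 2 - n j ^ 2)]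
    · rw [abs_mul, abs_div]; norm_num; nlinarith [abs_nonneg (n i ^ 2 - n j ^ 2)]

end FormBounds

section Profile

open Polynomial Polynomial.Chebyshev

theorem natCast_sin_eq_derivative_T (k : ℤ) (t : ℝ) :
    k * Real.sin (k * t) = Real.sin t * (derivative (T ℝ k)).eval (Real.cos t) := by
  have h1 : HasDerivAt (fun t : ℝ => (T ℝ k).eval (Real.cos t))
      ((derivative (T ℝ k)).eval (Real.cos t) * -Real.sin t) t :=
    ((T ℝ k).hasDerivAt _).comp t (Real.hasDerivAt_cos t)
  have h2 : HasDerivAt (fun t : ℝ => (T ℝ k).eval (Real.cos t))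
      (-Real.sin (k * t) * (k * 1)) t := by
    simp only [T_real_cos]
    exact (Real.hasDerivAt_cos _).comp t ((hasDerivAt_id t).const_mul (k : ℝ))
  linarith [h1.unique h2]

theorem sq_cos_eq_derivative_T (k : ℤ) (t : ℝ) :
    k ^ 2 * Real.cos (k * t) = Real.cos t * (derivative (T ℝ k)).eval (Real.cos t)
      - Real.sin t ^ 2 * (derivative (derivative (T ℝ k))).eval (Real.cos t) := by
  have h0 : HasDerivAt (fun t : ℝ => (derivative (T ℝ k)).eval (Real.cos t))
      ((derivative (derivative (T ℝ k))).eval (Real.cos t) * -Real.sin t) t :=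
    ((derivative (T ℝ k)).hasDerivAt _).comp t (Real.hasDerivAt_cos t)
  have h1 := (Real.hasDerivAt_sin t).mul h0
  have h2 : HasDerivAt (fun t : ℝ => k * Real.sin (k * t))
      (k * (Real.cos (k * t) * (k * 1))) t :=
    ((Real.hasDerivAt_sin _).comp t ((hasDerivAt_id t).const_mul (k : ℝ))).const_mul (k : ℝ)
  rw [show (fun t : ℝ => k * Real.sin (k * t)) =
    Real.sin * fun t : ℝ => (derivative (T ℝ k)).eval (Real.cos t) from
    funext (natCast_sin_eq_derivative_T k)] at h2
  linear_combination h2.unique h1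

theorem cube_sin_eq_derivative_T (k : ℤ) (t : ℝ) :
    k ^ 3 * Real.sin (k * t) =
      -(Real.sin t ^ 3 * (derivative (derivative (derivative (T ℝ k)))).eval (Real.cos t))
      + 3 * (Real.sin t * Real.cos t * (derivative (derivative (T ℝ k))).eval (Real.cos t))
      + Real.sin t * (derivative (T ℝ k)).eval (Real.cos t) := by
  have h0 : HasDerivAt (fun t : ℝ => (derivative (T ℝ k)).eval (Real.cos t))
      ((derivative (derivative (T ℝ k))).eval (Real.cos t) * -Real.sin t) t :=
    ((derivative (T ℝ k)).hasDerivAt _).comp t (Real.hasDerivAt_cos t)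
  have h0' : HasDerivAt (fun t : ℝ => (derivative (derivative (T ℝ k))).eval (Real.cos t))
      ((derivative (derivative (derivative (T ℝ k)))).eval (Real.cos t) * -Real.sin t) t :=
    ((derivative (derivative (T ℝ k))).hasDerivAt _).comp t (Real.hasDerivAt_cos t)
  have h1 := ((Real.hasDerivAt_cos t).mul h0).sub (((Real.hasDerivAt_sin t).pow 2).mul h0')
  have h2 : HasDerivAt (fun t : ℝ => k ^ 2 * Real.cos (k * t))
      (k ^ 2 * (-Real.sin (k * t) * (k * 1))) t :=
    ((Real.hasDerivAt_cos _).comp t ((hasDerivAt_id t).const_mul (k : ℝ))).const_mul ((k : ℝ) ^ 2)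
  have h3 := h2.congr_of_eventuallyEq
    (Filter.Eventually.of_forall fun u => (sq_cos_eq_derivative_T k u).symm)
  have h4 := h3.unique h1
  simp only [Nat.cast_ofNat, Pi.pow_apply] at h4
  linear_combination -h4

theorem abs_derivative_T_le (k : ℤ) {c : ℝ} (hc : |c| ≤ 1) :
    |(derivative (T ℝ k)).eval c| ≤ k ^ 2 := by
  have h := abs_iterate_derivative_T_real_le k 1 hc
  simpa [derivative_T_eval_one] using h

theorem derivative_derivative_T_eval_one (k : ℤ) :
    (derivative (derivative (T ℝ k))).eval 1 = ((k : ℝ) ^ 4 - k ^ 2) / 3 := by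
  have h := iterate_derivative_T_eval_one_eq_div (𝔽 := ℝ) k 2
  simp [Finset.prod_range_succ] at h
  rw [h]
  ring

theorem abs_derivative_derivative_T_le (k : ℤ) {c : ℝ} (hc : |c| ≤ 1) :
    |(derivative (derivative (T ℝ k))).eval c| ≤ ((k : ℝ) ^ 4 - k ^ 2) / 3 := by
  have h := abs_iterate_derivative_T_real_le k 2 hc
  simpa [derivative_derivative_T_eval_one] using h

theorem sq_sub_derivative_T_le (k : ℤ) {c : ℝ} (hc0 : 0 ≤ c) (hc1 : c ≤ 1) :
    k ^ 2 - (derivative (T ℝ k)).eval c ≤ ((k : ℝ) ^ 4 - k ^ 2) / 3 * (1 - c) := by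
  have h := (convex_Icc (0 : ℝ) 1).image_sub_le_mul_sub_of_deriv_le
    (derivative (T ℝ k)).continuousOn (derivative (T ℝ k)).differentiable.differentiableOn
    (C := ((k : ℝ) ^ 4 - k ^ 2) / 3) ?_ c ⟨hc0, hc1⟩ 1 ⟨zero_le_one, le_rfl⟩ hc1
  · rwa [derivative_T_eval_one] at h
  intro u hu
  rw [interior_Icc] at hu
  rw [Polynomial.deriv]
  exact (le_abs_self _).trans
    (abs_derivative_derivative_T_le k (abs_le.2 ⟨by linarith [hu.1], hu.2.le⟩))

variable (I : Finset ℤ) (w : ℤ → ℝ)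

/-- The polynomial `∑ w_k T_k`. -/
noncomputable def chebSum : ℝ[X] := ∑ k ∈ I, C (w k) * T ℝ k

theorem eval_chebSum_cos (t : ℝ) :
    (chebSum I w).eval (Real.cos t) = ∑ k ∈ I, w k * Real.cos (k * t) := by
  simp [chebSum, eval_finsetSum, T_real_cos]

theorem eval_derivative_chebSum (c : ℝ) :
    (derivative (chebSum I w)).eval c = ∑ k ∈ I, w k * (derivative (T ℝ k)).eval c := by
  simp [chebSum, eval_finsetSum]

theorem eval_derivative_derivative_chebSum (c : ℝ) :
    (derivative (derivative (chebSum I w))).eval c =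
      ∑ k ∈ I, w k * (derivative (derivative (T ℝ k))).eval c := by
  simp [chebSum, eval_finsetSum]

theorem eval_derivative_derivative_derivative_chebSum (c : ℝ) :
    (derivative (derivative (derivative (chebSum I w)))).eval c =
      ∑ k ∈ I, w k * (derivative (derivative (derivative (T ℝ k)))).eval c := by
  simp [chebSum, eval_finsetSum]

variable {I w}

theorem abs_sum_mul_le {f g : ℤ → ℝ} (hw : ∀ k ∈ I, 0 ≤ w k) (h : ∀ k, |f k| ≤ g k) :
    |∑ k ∈ I, w k * f k| ≤ ∑ k ∈ I, w k * g k := by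
  refine (Finset.abs_sum_le_sum_abs _ _).trans (Finset.sum_le_sum fun k hk => ?_)
  rw [abs_mul, abs_of_nonneg (hw k hk)]
  exact mul_le_mul_of_nonneg_left (h k) (hw k hk)

theorem profileBounds_chebSum (hw : ∀ k ∈ I, 0 ≤ w k) {t : ℝ} (ht0 : 0 ≤ t) (ht : t ≤ π / 2) :
    ProfileBounds (Real.sin t) t (Real.cos t) (∑ k ∈ I, w k * (k : ℝ) ^ 2)
      (∑ k ∈ I, w k * (k : ℝ) ^ 4) ((derivative (chebSum I w)).eval (Real.cos t))
      ((derivative (derivative (chebSum I w))).eval (Real.cos t))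
      ((derivative (derivative (derivative (chebSum I w)))).eval (Real.cos t)) := by
  have hcos : 0 ≤ Real.cos t := Real.cos_nonneg_of_mem_Icc ⟨by linarith, ht⟩
  have hdiff : (∑ k ∈ I, w k * (k : ℝ) ^ 4 - ∑ k ∈ I, w k * (k : ℝ) ^ 2) / 3 =
      ∑ k ∈ I, w k * (((k : ℝ) ^ 4 - k ^ 2) / 3) := by
    rw [← Finset.sum_sub_distrib, Finset.sum_div]
    exact Finset.sum_congr rfl fun k _ => by ring
  have hcos_le : ∀ u : ℝ, 1 - Real.cos u ≤ u ^ 2 / 2 := fun u => by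
    linarith [Real.one_sub_sq_div_two_le_cos (x := u)]
  have hangle : Real.sin t ^ 2 * (derivative (derivative (chebSum I w))).eval (Real.cos t)
      - Real.cos t * (derivative (chebSum I w)).eval (Real.cos t) + ∑ k ∈ I, w k * (k : ℝ) ^ 2 =
      ∑ k ∈ I, w k * ((k : ℝ) ^ 2 * (1 - Real.cos (k * t))) := by
    rw [eval_derivative_derivative_chebSum, eval_derivative_chebSum, Finset.mul_sum,
      Finset.mul_sum, ← Finset.sum_sub_distrib, ← Finset.sum_add_distrib]
    refine Finset.sum_congr rfl fun k _ => ?_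
    linear_combination w k * sq_cos_eq_derivative_T k t
  exact {
    sin_nonneg := Real.sin_nonneg_of_nonneg_of_le_pi ht0 (by linarith [Real.pi_pos])
    sin_le := Real.sin_le ht0
    cos_nonneg := hcos
    cos_le_one := Real.cos_le_one t
    one_sub_cos_le := hcos_le t
    A₂_nonneg := Finset.sum_nonneg fun k hk => mul_nonneg (hw k hk) (sq_nonneg _)
    A₂_le := by
      refine Finset.sum_le_sum fun k hk => mul_le_mul_of_nonneg_left ?_ (hw k hk)
      have h : (k ^ 2 : ℤ) ≤ k ^ 4 := by
        nlinarith [sq_nonneg (k ^ 2 : ℤ), sq_nonneg k, Int.le_self_sq (k ^ 2)]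
      exact_mod_cast h
    abs_first_le := by
      rw [eval_derivative_chebSum]
      exact abs_sum_mul_le hw fun k => abs_derivative_T_le k (Real.abs_cos_le_one t)
    abs_second_le := by
      rw [eval_derivative_derivative_chebSum, hdiff]
      exact abs_sum_mul_le hw fun k => abs_derivative_derivative_T_le k (Real.abs_cos_le_one t)
    sub_first_le := by
      rw [hdiff, eval_derivative_chebSum, ← Finset.sum_sub_distrib, Finset.sum_mul]
      refine Finset.sum_le_sum fun k hk => ?_
      rw [← mul_sub, mul_assoc]
      exact mul_le_mul_of_nonneg_left (sq_sub_derivative_T_le k hcos (Real.cos_le_one t)) (hw k hk)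
    second_angle_mem := by
      rw [hangle]
      constructor
      · exact Finset.sum_nonneg fun k hk => mul_nonneg (hw k hk)
          (mul_nonneg (sq_nonneg _) (by linarith [Real.cos_le_one (k * t)]))
      · rw [Finset.sum_mul, Finset.sum_div]
        refine Finset.sum_le_sum fun k hk => ?_
        rw [mul_assoc, mul_div_assoc]
        refine mul_le_mul_of_nonneg_left ?_ (hw k hk)
        calc (k : ℝ) ^ 2 * (1 - Real.cos (k * t)) ≤ (k : ℝ) ^ 2 * ((k * t) ^ 2 / 2) := by
              gcongr; exact hcos_le _
          _ = (k : ℝ) ^ 4 * t ^ 2 / 2 := by ring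
    third_angle_le := by
      rw [eval_derivative_derivative_derivative_chebSum, eval_derivative_derivative_chebSum,
        eval_derivative_chebSum, Finset.mul_sum, Finset.mul_sum, Finset.mul_sum, Finset.mul_sum,
        ← Finset.sum_neg_distrib, ← Finset.sum_add_distrib, ← Finset.sum_add_distrib]
      rw [Finset.sum_congr rfl fun k _ => show _ = w k * ((k : ℝ) ^ 3 * Real.sin (k * t)) by
        rw [cube_sin_eq_derivative_T k t]; ring, Finset.sum_mul]
      refine (abs_sum_mul_le hw (g := fun k => (k : ℝ) ^ 4 * t) fun k => ?_).trans_eq ?_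
      · rw [abs_mul]
        calc |(k : ℝ) ^ 3| * |Real.sin (k * t)| ≤ |(k : ℝ) ^ 3| * |k * t| :=
              mul_le_mul_of_nonneg_left Real.abs_sin_le_abs (abs_nonneg _)
          _ = (k : ℝ) ^ 4 * t := by
              rw [abs_mul, abs_of_nonneg ht0, ← mul_assoc, ← abs_mul, ← pow_succ,
                abs_of_nonneg (Even.pow_nonneg (by decide) _)]
      · exact Finset.sum_congr rfl fun k _ => by ring }

/-- The Fourier weights of the kernel. -/
noncomputable def sigmaWeight (s N : ℕ) (k : ℤ) : ℝ :=
  gtilde s ((k : ℝ) / (2 * ((N : ℝ) + 1))) / gnorm s N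

theorem sigmaT_eq_sum (s N : ℕ) (t : ℝ) :
    sigmaT s N t = ∑ k ∈ Finset.Icc (-(N : ℤ)) N, sigmaWeight s N k * Real.cos (k * t) := by
  unfold sigmaT
  rw [Finset.mul_sum, Complex.re_sum]
  refine Finset.sum_congr rfl fun k _ => ?_
  have h : (k : ℂ) * t * Complex.I = ((k * t : ℝ) : ℂ) * Complex.I := by push_cast; ring
  rw [h, ← mul_assoc, show (1 / (gnorm s N : ℂ)) * (gtilde s ((k : ℝ) / (2 * ((N : ℝ) + 1))) : ℂ) =
    ((sigmaWeight s N k : ℝ) : ℂ) by rw [sigmaWeight]; push_cast; ring, Complex.re_ofReal_mul,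
    Complex.exp_ofReal_mul_I_re]

theorem iteratedDeriv_two_sigmaT (s N : ℕ) :
    iteratedDeriv 2 (sigmaT s N) 0 =
      -∑ k ∈ Finset.Icc (-(N : ℤ)) N, sigmaWeight s N k * (k : ℝ) ^ 2 := by
  have h1 : deriv (sigmaT s N) = fun t => ∑ k ∈ Finset.Icc (-(N : ℤ)) N,
      sigmaWeight s N k * (-Real.sin (k * t) * (k * 1)) := by
    funext t
    rw [show sigmaT s N = fun t => ∑ k ∈ Finset.Icc (-(N : ℤ)) N,
      sigmaWeight s N k * Real.cos (k * t) from funext (sigmaT_eq_sum s N)]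
    exact (HasDerivAt.fun_sum fun (k : ℤ) _ => ((Real.hasDerivAt_cos _).comp t
      ((hasDerivAt_id t).const_mul (k : ℝ))).const_mul (sigmaWeight s N k)).deriv
  have h2 : deriv (fun t => ∑ k ∈ Finset.Icc (-(N : ℤ)) N,
      sigmaWeight s N k * (-Real.sin (k * t) * (k * 1))) 0 = ∑ k ∈ Finset.Icc (-(N : ℤ)) N,
      sigmaWeight s N k * (-(Real.cos (k * 0) * (k * 1)) * (k * 1)) :=
    (HasDerivAt.fun_sum fun (k : ℤ) _ => ((((Real.hasDerivAt_sin _).comp (0 : ℝ)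
      ((hasDerivAt_id (0 : ℝ)).const_mul (k : ℝ))).neg).mul_const _).const_mul
      (sigmaWeight s N k)).deriv
  rw [iteratedDeriv_succ, iteratedDeriv_one, h1, h2, ← Finset.sum_neg_distrib]
  refine Finset.sum_congr rfl fun k _ => ?_
  rw [mul_zero, Real.cos_zero]
  ring

theorem IsSO3.trace_mem {z : Mat3} (hz : IsSO3 z) :
    (Matrix.trace z - 1) / 2 ∈ Set.Icc (-1 : ℝ) 1 := by
  have hA : ∀ i, z.adjugate i i = z i i := fun i => by rw [hz.adjugate_eq, Matrix.transpose_apply]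
  have hO : ∀ i, (z.transpose * z) i i = 1 := fun i => by rw [hz.1, Matrix.one_apply_eq]
  simp only [Matrix.adjugate_fin_three, Matrix.mul_apply, Fin.sum_univ_three,
    Matrix.transpose_apply] at hA hO
  have a0 := hA 0
  have a1 := hA 1
  have a2 := hA 2
  simp at a0 a1 a2
  have h : ((Matrix.trace z - 1) / 2) ^ 2 ≤ 1 := by
    rw [Matrix.trace_fin_three]
    nlinarith [hO 0, hO 1, hO 2, sq_nonneg (z 2 1 - z 1 2), sq_nonneg (z 0 2 - z 2 0),
      sq_nonneg (z 1 0 - z 0 1)]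
  exact abs_le.1 (abs_le_of_sq_le h)

theorem sigmaK_eq_polyKernel (s N : ℕ) {x y : Mat3} (hx : IsSO3 x) (hy : IsSO3 y) :
    sigmaK s N x y = polyKernel (chebSum (Finset.Icc (-(N : ℤ)) N) (sigmaWeight s N)) x y := by
  have hz := (hy.transpose.mul hx).trace_mem
  rw [sigmaK, polyKernel, hy.inv_eq, sigmaT_eq_sum, ← eval_chebSum_cos, rotAngle,
    Real.cos_arccos hz.1 hz.2]

end Profile

section SplineRegularity

open Polynomial MeasureTheory

variable {s : ℕ}

theorem measurable_real_sign : Measurable Real.sign := by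
  unfold Real.sign
  exact Measurable.ite measurableSet_Iio measurable_const
    (Measurable.ite measurableSet_Ioi measurable_const measurable_const)

theorem measurable_fspline_zero (s : ℕ) : Measurable (fspline s 0) :=
  (measurable_real_sign.comp (Polynomial.continuous _).measurable).const_mul _

theorem abs_fspline_zero_le (s : ℕ) (x : ℝ) : |fspline s 0 x| ≤ 1 := by
  rw [fspline, abs_mul, abs_pow, abs_neg, abs_one, one_pow, one_mul]
  rcases Real.sign_apply_eq (((Chebyshev.U ℝ ((s : ℤ) - 1))).eval x) with h | h | h <;> simp [h]

theorem intervalIntegrable_fspline_zero (s : ℕ) (a b : ℝ) :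
    IntervalIntegrable (fspline s 0) volume a b := by
  rw [intervalIntegrable_iff]
  refine Measure.integrableOn_of_bounded (M := 1) (by simp)
    (measurable_fspline_zero s).aestronglyMeasurable (Filter.Eventually.of_forall fun x => ?_)
  exact abs_fspline_zero_le s x

theorem fspline_succ_apply (s k : ℕ) (x : ℝ) :
    fspline s (k + 1) x = ∫ t in (-1 : ℝ)..x, fspline s k t := rfl

theorem fspline_succ_neg_one (s k : ℕ) : fspline s (k + 1) (-1) = 0 := by
  rw [fspline_succ_apply, intervalIntegral.integral_same]

theorem intervalIntegrable_fspline (s k : ℕ) : ∀ a b : ℝ,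
    IntervalIntegrable (fspline s k) volume a b := by
  induction k with
  | zero => exact intervalIntegrable_fspline_zero s
  | succ k ih =>
    exact fun a b => (intervalIntegral.continuous_primitive ih (-1)).intervalIntegrable a b

theorem continuous_fspline_succ (s k : ℕ) : Continuous (fspline s (k + 1)) :=
  intervalIntegral.continuous_primitive (intervalIntegrable_fspline s k) (-1)

theorem continuousAt_fspline (s k : ℕ) {x : ℝ}
    (hx : (Chebyshev.U ℝ ((s : ℤ) - 1)).eval x ≠ 0) : ContinuousAt (fspline s k) x := by
  cases k with
  | zero =>
    have hsign : ContinuousAt Real.sign ((Chebyshev.U ℝ ((s : ℤ) - 1)).eval x) := by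
      rcases lt_or_gt_of_ne hx with h | h
      · refine continuousAt_const.congr (f := fun _ => (-1 : ℝ)) ?_
        filter_upwards [Iio_mem_nhds h] with u hu using (Real.sign_of_neg hu).symm
      · refine continuousAt_const.congr (f := fun _ => (1 : ℝ)) ?_
        filter_upwards [Ioi_mem_nhds h] with u hu using (Real.sign_of_pos hu).symm
    exact (ContinuousAt.comp (g := Real.sign)
      (f := fun x => (Chebyshev.U ℝ ((s : ℤ) - 1)).eval x) hsign
      (Polynomial.continuous _).continuousAt).const_mul _
  | succ k => exact (continuous_fspline_succ s k).continuousAt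

theorem hasDerivAt_fspline_succ (s k : ℕ) {x : ℝ}
    (hx : (Chebyshev.U ℝ ((s : ℤ) - 1)).eval x ≠ 0) :
    HasDerivAt (fspline s (k + 1)) (fspline s k x) x := by
  refine intervalIntegral.integral_hasDerivAt_right (intervalIntegrable_fspline s k _ _) ?_
    (continuousAt_fspline s k hx)
  cases k with
  | zero => exact (measurable_fspline_zero s).stronglyMeasurable.stronglyMeasurableAtFilter
  | succ k => exact (continuous_fspline_succ s k).stronglyMeasurable.stronglyMeasurableAtFilter

theorem countable_setOf_U_eval_eq_zero (hs : s ≠ 0) :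
    {x : ℝ | (Chebyshev.U ℝ ((s : ℤ) - 1)).eval x = 0}.Countable := by
  have h : Chebyshev.U ℝ ((s : ℤ) - 1) ≠ 0 := by
    intro h0
    have := Chebyshev.U_eval_one (R := ℝ) ((s : ℤ) - 1)
    rw [h0] at this
    simp at this
    exact hs (by exact_mod_cast this.symm)
  refine (Set.Finite.subset (Chebyshev.U ℝ ((s : ℤ) - 1)).roots.toFinset.finite_toSet
    fun x hx => ?_).countable
  simpa [h] using hx

variable {E : Type*} [NormedAddCommGroup E] [NormedSpace ℝ E] [CompleteSpace E]

/-- Integration by parts against the spline chain. -/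
theorem integral_fspline_succ_smul_deriv (hs : s ≠ 0) {k : ℕ} (h1 : fspline s (k + 1) 1 = 0)
    {G G' : ℝ → E} (hG : ∀ x, HasDerivAt G (G' x) x) (hG' : Continuous G') :
    ∫ x in (-1 : ℝ)..1, fspline s (k + 1) x • G' x = -∫ x in (-1 : ℝ)..1, fspline s k x • G x := by
  have hGc : Continuous G := continuous_iff_continuousAt.2 fun x => (hG x).continuousAt
  have hi1 : IntervalIntegrable (fun x => fspline s (k + 1) x • G' x) volume (-1) 1 :=
    ((continuous_fspline_succ s k).smul hG').intervalIntegrable _ _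
  have hi2 : IntervalIntegrable (fun x => fspline s k x • G x) volume (-1) 1 :=
    (intervalIntegrable_fspline s k _ _).smul_continuousOn hGc.continuousOn
  have h := integral_eq_of_hasDerivAt_off_countable (fun x => fspline s (k + 1) x • G x)
    (fun x => fspline s (k + 1) x • G' x + fspline s k x • G x)
    (countable_setOf_U_eval_eq_zero hs)
    ((continuous_fspline_succ s k).smul hGc).continuousOn
    (fun x hx => (hasDerivAt_fspline_succ s k hx.2).smul (hG x)) (hi1.add hi2)
  rw [intervalIntegral.integral_add hi1 hi2, h1, fspline_succ_neg_one, zero_smul, zero_smul,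
    sub_zero] at h
  exact eq_neg_of_add_eq_zero_left h

/-- The extremal nodes `cos (j π / s)`. -/
noncomputable def chebNode (s j : ℕ) : ℝ := Real.cos (j * π / s)

theorem chebNode_zero (s : ℕ) : chebNode s 0 = 1 := by simp [chebNode]

theorem chebNode_self (hs : s ≠ 0) : chebNode s s = -1 := by
  rw [chebNode, mul_div_cancel_left₀ _ (Nat.cast_ne_zero.2 hs), Real.cos_pi]

theorem abs_chebNode_le_one (s j : ℕ) : |chebNode s j| ≤ 1 := Real.abs_cos_le_one _

theorem chebNode_succ_le {j : ℕ} (hj : j < s) : chebNode s (j + 1) ≤ chebNode s j := by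
  have hs : (0 : ℝ) < s := by exact_mod_cast (Nat.zero_le j).trans_lt hj
  refine Real.cos_le_cos_of_nonneg_of_le_pi (by positivity) ?_ ?_
  · rw [div_le_iff₀ hs, mul_comm]
    exact mul_le_mul_of_nonneg_left (by exact_mod_cast hj) Real.pi_pos.le
  · gcongr
    simp

theorem fspline_zero_of_mem_Ioo {j : ℕ} (hj : j < s) {x : ℝ}
    (hx : x ∈ Set.Ioo (chebNode s (j + 1)) (chebNode s j)) :
    fspline s 0 x = (-1) ^ (s - 1 + j) := by
  have hs : (0 : ℝ) < s := by exact_mod_cast (Nat.zero_le j).trans_lt hj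
  have hx1 : x ≤ 1 := hx.2.le.trans (Real.cos_le_one _)
  have hx0 : -1 ≤ x := (Real.neg_one_le_cos _).trans hx.1.le
  have hcos := Real.cos_arccos hx0 hx1
  have hθ1 : j * π / s < Real.arccos x := by
    by_contra! h
    have := Real.cos_le_cos_of_nonneg_of_le_pi (Real.arccos_nonneg x) ?_ h
    · rw [hcos] at this
      exact absurd hx.2 this.not_gt
    · rw [div_le_iff₀ hs, mul_comm]
      exact mul_le_mul_of_nonneg_left (by exact_mod_cast hj.le) Real.pi_pos.le
  have hθ2 : Real.arccos x < (j + 1 : ℕ) * π / s := by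
    by_contra! h
    have := Real.cos_le_cos_of_nonneg_of_le_pi (by positivity) (Real.arccos_le_pi x) h
    rw [hcos] at this
    exact absurd hx.1 this.not_gt
  rw [div_lt_iff₀ hs] at hθ1
  rw [lt_div_iff₀ hs] at hθ2
  push_cast at hθ2
  have hsinpos : 0 < Real.sin (Real.arccos x) := by
    refine Real.sin_pos_of_pos_of_lt_pi ?_ ?_
    · by_contra! h
      nlinarith [Real.pi_pos, Nat.cast_nonneg (α := ℝ) j]
    · by_contra! h
      have : (j : ℝ) + 1 ≤ s := by exact_mod_cast hj
      nlinarith [Real.pi_pos]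
  have hU := Chebyshev.U_real_cos (Real.arccos x) ((s : ℤ) - 1)
  rw [hcos] at hU
  push_cast at hU
  rw [sub_add_cancel] at hU
  have hsin : 0 < (-1) ^ j * Real.sin (s * Real.arccos x) := by
    have h0 : (-1) ^ j * Real.sin (s * Real.arccos x) =
        Real.sin (s * Real.arccos x - j * π) := by
      rw [Real.sin_sub_nat_mul_pi]
    rw [h0]
    exact Real.sin_pos_of_pos_of_lt_pi (by linarith) (by linarith)
  rw [← hU, ← mul_assoc] at hsin
  have hsgn := pos_of_mul_pos_left hsin hsinpos.le
  have hsign : Real.sign ((Chebyshev.U ℝ ((s : ℤ) - 1)).eval x) = (-1) ^ j := by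
    rcases neg_one_pow_eq_or ℝ j with h | h
    · rw [h] at hsgn ⊢
      exact Real.sign_of_pos (by linarith)
    · rw [h] at hsgn ⊢
      exact Real.sign_of_neg (by linarith)
  simp only [fspline, pow_add, hsign]

theorem integral_fspline_zero_smul_deriv (hs : s ≠ 0)
    {H H' : ℝ → E} (hH : ∀ x, HasDerivAt H (H' x) x) (hH' : Continuous H') :
    ∫ x in (-1 : ℝ)..1, fspline s 0 x • H' x =
      ∑ j ∈ Finset.range s, (-1 : ℝ) ^ (s - 1 + j) •
        (H (chebNode s j) - H (chebNode s (j + 1))) := by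
  have hinteg : ∀ a b, IntervalIntegrable (fun x => fspline s 0 x • H' x) volume a b := fun a b =>
    (intervalIntegrable_fspline s 0 a b).smul_continuousOn hH'.continuousOn
  have h := intervalIntegral.sum_integral_adjacent_intervals (a := chebNode s) (n := s)
    (μ := volume) (f := fun x => fspline s 0 x • H' x) fun k _ => hinteg _ _
  rw [chebNode_zero, chebNode_self hs] at h
  rw [intervalIntegral.integral_symm, ← h, ← Finset.sum_neg_distrib]
  refine Finset.sum_congr rfl fun j hj => ?_
  rw [← intervalIntegral.integral_symm]
  have hj := Finset.mem_range.1 hj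
  rw [intervalIntegral.integral_congr_Ioo_of_le (chebNode_succ_le hj)
    (g := fun x => (-1 : ℝ) ^ (s - 1 + j) • H' x)
    (fun x hx => by simp only [fspline_zero_of_mem_Ioo hj hx]),
    intervalIntegral.integral_smul, intervalIntegral.integral_eq_sub_of_hasDerivAt
    (fun x _ => hH x) (hH'.intervalIntegrable _ _)]

end SplineRegularity

section SplineMoments

open Polynomial MeasureTheory Finset

variable {s : ℕ}

/-- Character orthogonality on roots of unity. -/
theorem sum_exp_zpow_pow (hs : s ≠ 0) (n : ℤ) :
    ∑ j ∈ range (2 * s), (Complex.exp (2 * π * Complex.I / (2 * s : ℕ)) ^ n) ^ j =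
      if (2 * s : ℤ) ∣ n then ((2 * s : ℕ) : ℂ) else 0 := by
  have hprim := Complex.isPrimitiveRoot_exp (2 * s) (by omega)
  have hcast : ((2 * s : ℕ) : ℤ) = 2 * s := by push_cast; rfl
  rw [← hcast]
  split_ifs with h
  · rw [(hprim.zpow_eq_one_iff_dvd n).2 h]
    simp
  · have h1 : Complex.exp (2 * π * Complex.I / (2 * s : ℕ)) ^ n ≠ 1 := fun h1 =>
      h ((hprim.zpow_eq_one_iff_dvd n).1 h1)
    rw [geom_sum_eq h1, ← zpow_natCast, ← zpow_mul, mul_comm n, zpow_mul, zpow_natCast,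
      hprim.pow_eq_one, one_zpow, sub_self, zero_div]

theorem chebNode_eq_exp (hs : s ≠ 0) (j : ℕ) :
    (chebNode s j : ℂ) = ((Complex.exp (2 * π * Complex.I / (2 * s : ℕ)) ^ (1 : ℤ)) ^ j +
      (Complex.exp (2 * π * Complex.I / (2 * s : ℕ)) ^ (-1 : ℤ)) ^ j) / 2 := by
  have hs' : (s : ℂ) ≠ 0 := Nat.cast_ne_zero.2 hs
  rw [chebNode, Complex.ofReal_cos, Complex.cos, zpow_one, zpow_neg_one, ← Complex.exp_neg,
    ← Complex.exp_nat_mul, ← Complex.exp_nat_mul]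
  congr 3 <;> push_cast <;> field_simp

theorem neg_one_pow_eq_exp (hs : s ≠ 0) (j : ℕ) :
    (-1 : ℂ) ^ j = (Complex.exp (2 * π * Complex.I / (2 * s : ℕ)) ^ (s : ℤ)) ^ j := by
  have hs' : (s : ℂ) ≠ 0 := Nat.cast_ne_zero.2 hs
  rw [zpow_natCast, ← Complex.exp_nat_mul, ← Complex.exp_pi_mul_I]
  congr 2
  push_cast
  field_simp

theorem sum_neg_one_pow_mul_chebNode_pow (hs : s ≠ 0) (q : ℕ) :
    ∑ j ∈ range (2 * s), (-1 : ℝ) ^ j * chebNode s j ^ q =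
      (2 * s) / 2 ^ q * ∑ r ∈ range (q + 1),
        if (2 * s : ℤ) ∣ s + 2 * r - q then (q.choose r : ℝ) else 0 := by
  have hζ : Complex.exp (2 * π * Complex.I / (2 * s : ℕ)) ≠ 0 := Complex.exp_ne_zero _
  rw [← Complex.ofReal_inj]
  push_cast
  have hterm : ∀ j, (-1 : ℂ) ^ j * (chebNode s j : ℂ) ^ q = ∑ r ∈ range (q + 1),
      (q.choose r : ℂ) / 2 ^ q *
        (Complex.exp (2 * π * Complex.I / (2 * s : ℕ)) ^ ((s : ℤ) + 2 * r - q)) ^ j := by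
    intro j
    rw [chebNode_eq_exp hs, neg_one_pow_eq_exp hs, div_pow, add_pow, mul_div_assoc', mul_sum,
      sum_div]
    refine sum_congr rfl fun r hr => ?_
    have hr : r ≤ q := by simpa [Nat.lt_succ_iff] using hr
    have hexp : (s : ℤ) + 2 * r - q = s + 1 * r + (-1) * ((q - r : ℕ) : ℤ) := by
      push_cast [hr]
      ring
    rw [hexp, zpow_add₀ hζ, zpow_add₀ hζ, zpow_mul, zpow_mul, zpow_natCast _ r,
      zpow_natCast _ (q - r), mul_pow, mul_pow, ← pow_mul, ← pow_mul, ← pow_mul, ← pow_mul,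
      mul_comm r j, mul_comm (q - r) j]
    ring
  simp_rw [hterm]
  rw [sum_comm, mul_sum]
  refine sum_congr rfl fun r _ => ?_
  rw [← mul_sum, sum_exp_zpow_pow hs]
  split_ifs <;> push_cast <;> ring

theorem chebNode_two_mul_sub {j : ℕ} (hs : s ≠ 0) (hj : j ≤ 2 * s) :
    chebNode s (2 * s - j) = chebNode s j := by
  have hs' : (s : ℝ) ≠ 0 := Nat.cast_ne_zero.2 hs
  rw [chebNode, chebNode, ← Real.cos_two_pi_sub]
  congr 1
  push_cast [hj]
  field_simp
  ring

/-- The alternating sum of the increments of `x ^ q` over the extremal nodes. -/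
noncomputable def altSum (s q : ℕ) : ℝ :=
  ∑ j ∈ range s, (-1 : ℝ) ^ j * (chebNode s j ^ q - chebNode s (j + 1) ^ q)

theorem altSum_eq_sum_range_two_mul (hs : s ≠ 0) (q : ℕ) :
    altSum s q = ∑ j ∈ range (2 * s), (-1 : ℝ) ^ j * chebNode s j ^ q := by
  have h2 : ∑ j ∈ range s, (-1 : ℝ) ^ (s + j) * chebNode s (s + j) ^ q =
      ∑ j ∈ range s, (-1 : ℝ) ^ (j + 1) * chebNode s (j + 1) ^ q := by
    rw [← sum_range_reflect]
    refine sum_congr rfl fun j hj => ?_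
    have hj := mem_range.1 hj
    have he : s + (s - 1 - j) = 2 * s - (j + 1) := by omega
    rw [he, chebNode_two_mul_sub hs (by omega)]
    congr 1
    rcases neg_one_pow_eq_or ℝ (j + 1) with h | h
    · rw [h]
      have : Even (j + 1) := by
        by_contra hodd
        rw [(Nat.not_even_iff_odd.1 hodd).neg_one_pow] at h
        norm_num at h
      exact Even.neg_one_pow (by grind)
    · rw [h]
      have : Odd (j + 1) := by
        by_contra hodd
        rw [(Nat.not_odd_iff_even.1 hodd).neg_one_pow] at h
        norm_num at h
      exact Odd.neg_one_pow (by grind)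
  rw [two_mul, sum_range_add, h2, altSum, ← sum_add_distrib]
  exact sum_congr rfl fun j _ => by ring

theorem altSum_eq_zero {q : ℕ} (hq : q < s) : altSum s q = 0 := by
  have hs : s ≠ 0 := by omega
  rw [altSum_eq_sum_range_two_mul hs, sum_neg_one_pow_mul_chebNode_pow hs, sum_eq_zero, mul_zero]
  intro r hr
  rw [if_neg]
  intro h
  have hr := mem_range.1 hr
  have := Int.le_of_dvd (by omega) h
  omega

theorem altSum_add_two_mul {a : ℕ} (ha : a < s) :
    altSum s (s + 2 * a) = 4 * s / 2 ^ (s + 2 * a) * (s + 2 * a).choose a := by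
  have hs : s ≠ 0 := by omega
  rw [altSum_eq_sum_range_two_mul hs, sum_neg_one_pow_mul_chebNode_pow hs, ← sum_filter]
  have hset : {r ∈ range (s + 2 * a + 1) |
      (2 * s : ℤ) ∣ (s : ℤ) + 2 * (r : ℕ) - ((s + 2 * a : ℕ) : ℤ)} = {a, a + s} := by
    ext r
    simp only [mem_filter, mem_range, mem_insert, mem_singleton]
    constructor
    · rintro ⟨hr, c, hc⟩
      push_cast at hc
      have h1 : (r : ℤ) - a = s * c := by linarith
      have hc0 : -1 < c := by
        by_contra! h
        nlinarith
      have hc2 : c < 2 := by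
        by_contra! h
        nlinarith
      obtain rfl | rfl : c = 0 ∨ c = 1 := by omega
      · left; omega
      · right; omega
    · rintro (rfl | rfl)
      · refine ⟨by omega, 0, ?_⟩
        push_cast
        ring
      · refine ⟨by omega, 1, ?_⟩
        push_cast
        ring
  rw [hset, sum_pair (by omega), Nat.choose_symm_of_eq_add (show s + 2 * a = a + s + a by ring)]
  ring

/-- Moments of the splines, as alternating sums over the extremal nodes. -/
theorem integral_fspline_mul_pow (hs_even : Even s) {k : ℕ} (hk : k < s) (m : ℕ) :
    ∫ x in (-1 : ℝ)..1, fspline s k x * x ^ m =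
      (-1) ^ (k + 1) * (m.factorial / (m + k + 1).factorial) * altSum s (m + k + 1) := by
  have hs : s ≠ 0 := by omega
  have hG : ∀ m : ℕ, ∀ x : ℝ, HasDerivAt (fun x : ℝ => x ^ (m + 1) / (m + 1)) (x ^ m) x := by
    intro m x
    have h := (hasDerivAt_pow (m + 1) x).div_const ((m : ℝ) + 1)
    refine h.congr_deriv ?_
    push_cast
    field_simp
  induction k generalizing m with
  | zero =>
    have h := integral_fspline_zero_smul_deriv (s := s) hs (hG m) (by fun_prop)
    simp only [smul_eq_mul] at h
    rw [h, altSum, mul_sum]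
    refine sum_congr rfl fun j _ => ?_
    have hodd : Odd (s - 1) := by grind
    rw [pow_add, hodd.neg_one_pow, add_zero, Nat.factorial_succ]
    push_cast
    field_simp
  | succ k ih =>
    have h1 : fspline s (k + 1) 1 = 0 := by
      have := ih (by omega) 0
      simp only [pow_zero, mul_one] at this
      rw [fspline_succ_apply, this, altSum_eq_zero (by omega), mul_zero]
    have h := integral_fspline_succ_smul_deriv (s := s) hs h1 (hG m) (by fun_prop)
    simp only [smul_eq_mul, mul_div_assoc', intervalIntegral.integral_div] at h
    rw [h, ih (by omega), show m + 1 + k + 1 = m + (k + 1) + 1 by ring, Nat.factorial_succ m]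
    push_cast
    field_simp
    ring

theorem fspline_one_eq_zero (hs_even : Even s) {k : ℕ} (hk : k + 1 < s) :
    fspline s (k + 1) 1 = 0 := by
  have := integral_fspline_mul_pow hs_even (show k < s by omega) 0
  simp only [pow_zero, mul_one] at this
  rw [fspline_succ_apply, this, altSum_eq_zero (by omega), mul_zero]

/-- Moments of the perfect B-spline. -/
noncomputable def splineMoment (s m : ℕ) : ℝ := ∫ x in (-1 : ℝ)..1, fspline s (s - 1) x * x ^ m

theorem splineMoment_two_mul (hs_even : Even s) {a : ℕ} (ha : a < s) :
    splineMoment s (2 * a) = (2 * a).factorial / (s + 2 * a).factorial *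
      (4 * s / 2 ^ (s + 2 * a) * (s + 2 * a).choose a) := by
  rw [splineMoment, integral_fspline_mul_pow hs_even (by omega),
    show 2 * a + (s - 1) + 1 = s + 2 * a by omega, show s - 1 + 1 = s by omega,
    hs_even.neg_one_pow, one_mul, altSum_add_two_mul ha]

theorem splineMoment_zero (hs_even : Even s) (hs : s ≠ 0) :
    splineMoment s 0 = 4 * s / (2 ^ s * s.factorial) := by
  have h := splineMoment_two_mul hs_even (a := 0) (by omega)
  simp only [mul_zero, add_zero, Nat.factorial_zero, Nat.choose_zero_right] at h
  rw [h, Nat.cast_one]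
  field_simp

theorem splineMoment_two (hs_even : Even s) (hs : 2 ≤ s) :
    splineMoment s 2 = splineMoment s 0 * (1 / (2 * (s + 1))) := by
  have h := splineMoment_two_mul hs_even (a := 1) (by omega)
  simp only [mul_one, Nat.choose_one_right, Nat.factorial_succ] at h
  rw [h, splineMoment_zero hs_even (by omega)]
  push_cast
  field_simp
  ring

theorem splineMoment_four (hs_even : Even s) (hs : 3 ≤ s) :
    splineMoment s 4 = splineMoment s 0 * (3 / (4 * (s + 2) * (s + 1))) := by
  have h := splineMoment_two_mul hs_even (a := 2) (by omega)
  simp only [Nat.reduceMul, Nat.factorial_succ, Nat.cast_choose_two] at h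
  rw [h, splineMoment_zero hs_even (by omega)]
  push_cast
  field_simp
  ring

end SplineMoments

section SplineNonneg

open Polynomial MeasureTheory

variable {s : ℕ}

/-- `f` takes `m + 1` alternating nonzero values inside `(-1, 1)`, starting with a negative one. -/
def HasAlternation (f : ℝ → ℝ) (m : ℕ) : Prop :=
  ∃ p : ℕ → ℝ, (∀ i < m, p i < p (i + 1)) ∧ -1 < p 0 ∧ p m < 1 ∧
    ∀ i ≤ m, 0 < (-1) ^ (i + 1) * f (p i)

theorem exists_mem_Ioo_pos_of_integral_pos {f : ℝ → ℝ} {a b : ℝ} (hab : a < b)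
    (hf : IntervalIntegrable f volume a b) (h : 0 < ∫ x in a..b, f x) :
    ∃ x ∈ Set.Ioo a b, 0 < f x := by
  by_contra! hneg
  have := intervalIntegral.integral_mono_on_of_le_Ioo hab.le hf
    (g := fun _ => 0) (by simp) hneg
  rw [intervalIntegral.integral_zero] at this
  exact absurd h this.not_gt

theorem HasAlternation.of_fspline_succ {k m : ℕ} (h1 : fspline s (k + 1) 1 = 0)
    (h : HasAlternation (fspline s (k + 1)) m) : HasAlternation (fspline s k) (m + 1) := by
  obtain ⟨p, hp, hp0, hpm, hval⟩ := h
  set e : ℕ → ℝ := fun i => if i = 0 then -1 else if i ≤ m + 1 then p (i - 1) else 1 with he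
  have he0 : e 0 = -1 := by simp [he]
  have hep : ∀ i ≤ m, e (i + 1) = p i := fun i hi => by simp [he, hi]
  have hel : e (m + 2) = 1 := by simp [he]
  have hmono : ∀ i ≤ m + 1, e i < e (i + 1) := by
    intro i hi
    rcases i with _ | i
    · rw [he0, hep 0 (by omega)]
      exact hp0
    · rcases (show i ≤ m by omega).eq_or_lt with rfl | hlt
      · rw [hel, hep i le_rfl]
        exact hpm
      · rw [hep i hlt.le, hep (i + 1) hlt]
        exact hp i hlt
  have hpos : ∀ i ≤ m, 0 < (-1) ^ (i + 1) * fspline s (k + 1) (e (i + 1)) := fun i hi => by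
    rw [hep i hi]
    exact hval i hi
  have hincr : ∀ i ≤ m + 1, 0 < (-1) ^ (i + 1) *
      (fspline s (k + 1) (e (i + 1)) - fspline s (k + 1) (e i)) := by
    intro i hi
    have hnext : 0 ≤ (-1) ^ (i + 1) * fspline s (k + 1) (e (i + 1)) := by
      rcases hi.eq_or_lt with rfl | hlt
      · rw [hel, h1, mul_zero]
      · exact (hpos i (by omega)).le
    rcases i with _ | i
    · rw [he0, fspline_succ_neg_one, sub_zero]
      exact hpos 0 (by omega)
    · have := hpos i (by omega)
      rw [pow_succ] at hnext ⊢
      linarith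
  have hex : ∀ i, ∃ q, i ≤ m + 1 → q ∈ Set.Ioo (e i) (e (i + 1)) ∧
      0 < (-1) ^ (i + 1) * fspline s k q := by
    intro i
    by_cases hi : i ≤ m + 1
    · obtain ⟨q, hq, hq'⟩ := exists_mem_Ioo_pos_of_integral_pos (hmono i hi)
        (f := fun x => (-1) ^ (i + 1) * fspline s k x)
        ((intervalIntegrable_fspline s k _ _).const_mul _) (by
          rw [intervalIntegral.integral_const_mul, ← intervalIntegral.integral_interval_sub_left
            (a := -1) (intervalIntegrable_fspline s k _ _) (intervalIntegrable_fspline s k _ _)]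
          exact hincr i hi)
      exact ⟨q, fun _ => ⟨hq, hq'⟩⟩
    · exact ⟨0, fun h => absurd h hi⟩
  choose q hq using hex
  refine ⟨q, fun i hi => ?_, ?_, ?_, fun i hi => (hq i hi).2⟩
  · exact (hq i hi.le).1.2.trans (hq (i + 1) hi).1.1
  · rw [← he0]
    exact (hq 0 (by omega)).1.1
  · rw [← hel]
    exact (hq (m + 1) le_rfl).1.2

theorem HasAlternation.fspline_zero (hs_even : Even s) {k m : ℕ} (hk : k < s)
    (h : HasAlternation (fspline s k) m) : HasAlternation (fspline s 0) (m + k) := by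
  induction k generalizing m with
  | zero => exact h
  | succ k ih =>
    have := ih (by omega) (h.of_fspline_succ (fspline_one_eq_zero hs_even hk))
    rwa [add_right_comm] at this

/-- A polynomial with `n + 2` alternating values has degree greater than `n`. -/
theorem lt_natDegree_of_alternating {P : ℝ[X]} {n : ℕ} {e : ℕ → ℝ}
    (he : ∀ i ≤ n, e i < e (i + 1)) (hP : ∀ i ≤ n + 1, 0 < (-1) ^ (i + 1) * P.eval (e i)) :
    n < P.natDegree := by
  have hP0 : P ≠ 0 := by
    rintro rfl
    simpa using hP 0 (by omega)
  have hroot : ∀ i : Fin (n + 1), ∃ r ∈ Set.Ioo (e i) (e (i + 1)), P.eval r = 0 := by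
    intro i
    have hi : (i : ℕ) ≤ n := by omega
    have hc : ContinuousOn (fun x => (-1) ^ ((i : ℕ) + 1) * P.eval x)
        (Set.Icc (e i) (e (i + 1))) := by fun_prop
    have h2 := hP (i + 1) (by omega)
    rw [pow_succ] at h2
    obtain ⟨r, hr, hr0⟩ := intermediate_value_Ioo' (he i hi).le hc
      (show (0 : ℝ) ∈ _ from ⟨by linarith, hP i (by omega)⟩)
    exact ⟨r, hr, by simpa using hr0⟩
  choose r hr hr0 using hroot
  have hmono : StrictMono r := by
    rw [Fin.strictMono_iff_lt_succ]
    intro i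
    exact (hr i.castSucc).2.trans (by simpa using (hr i.succ).1)
  have hcard := card_le_degree_of_subset_roots (p := P) (Z := Finset.univ.image r) (by
    intro x hx
    obtain ⟨i, -, rfl⟩ := Finset.mem_image.1 (Finset.mem_def.2 hx)
    exact (mem_roots hP0).2 (hr0 i))
  rw [Finset.card_image_of_injective _ hmono.injective, Finset.card_univ, Fintype.card_fin] at hcard
  omega

/-- The perfect B-spline is nonnegative on its support. -/
theorem fspline_nonneg (hs_even : Even s) (hs : 2 ≤ s) {t : ℝ} (ht : t ∈ Set.Ioo (-1 : ℝ) 1) :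
    0 ≤ fspline s (s - 1) t := by
  by_contra! hneg
  have hodd : Odd (s - 1) := by grind
  have halt : HasAlternation (fspline s (s - 1)) 0 :=
    ⟨fun _ => t, by simp, ht.1, ht.2, fun i hi => by
      simpa [Nat.le_zero.1 hi] using hneg⟩
  obtain ⟨p, hp, hp0, -, hval⟩ := halt.fspline_zero hs_even (by omega)
  rw [zero_add] at hp hval
  have hU : ∀ i ≤ s - 1, 0 < (-1) ^ i * (Chebyshev.U ℝ ((s : ℤ) - 1)).eval (p i) := by
    intro i hi
    have h := hval i hi
    simp only [fspline, hodd.neg_one_pow, pow_succ] at h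
    set u := (Chebyshev.U ℝ ((s : ℤ) - 1)).eval (p i)
    rcases lt_trichotomy u 0 with hu | hu | hu
    · rw [Real.sign_of_neg hu] at h
      nlinarith
    · simp [hu] at h
    · rw [Real.sign_of_pos hu] at h
      nlinarith
  have hneg1 : (Chebyshev.U ℝ ((s : ℤ) - 1)).eval (-1) < 0 := by
    have hodd' : Odd ((s : ℤ) - 1) := by
      obtain ⟨r, rfl⟩ := hs_even
      exact ⟨r - 1, by push_cast; ring⟩
    rw [Chebyshev.U_eval_neg_one, Int.negOnePow_odd _ hodd']
    have : (0 : ℝ) < s := by exact_mod_cast (show 0 < s by omega)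
    push_cast
    linarith
  have hdeg := lt_natDegree_of_alternating (P := Chebyshev.U ℝ ((s : ℤ) - 1)) (n := s - 1)
    (e := fun i => if i = 0 then -1 else p (i - 1)) (fun i hi => by
      rcases i with _ | i
      · simpa using hp0
      · simpa using hp i (by omega)) (fun i hi => by
      rcases i with _ | i
      · simpa using hneg1
      · simpa [pow_succ] using hU i (by omega))
  have hnat : (Chebyshev.U ℝ ((s : ℤ) - 1)).natDegree = s - 1 := by
    rw [Chebyshev.natDegree_U]
    omega
  omega

end SplineNonneg

section SplineFourier

open MeasureTheory

variable {s : ℕ}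

/-- Fourier integrals of the splines with monomial weights. -/
noncomputable def splineFourier (s k m : ℕ) (ξ : ℝ) : ℂ :=
  ∫ x in (-1 : ℝ)..1, fspline s k x • (Complex.exp ((-ξ * x : ℝ) * Complex.I) * (x : ℂ) ^ m)

theorem norm_exp_mul_pow_le_one (ξ : ℝ) (m : ℕ) {x : ℝ} (hx : |x| ≤ 1) :
    ‖Complex.exp ((-ξ * x : ℝ) * Complex.I) * (x : ℂ) ^ m‖ ≤ 1 := by
  rw [norm_mul, Complex.norm_exp_ofReal_mul_I, one_mul, norm_pow, Complex.norm_real,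
    Real.norm_eq_abs]
  exact pow_le_one₀ (abs_nonneg x) hx

theorem hasDerivAt_exp_mul_pow (ξ : ℝ) (m : ℕ) (x : ℝ) :
    HasDerivAt (fun x : ℝ => Complex.exp ((-ξ * x : ℝ) * Complex.I) * (x : ℂ) ^ m)
      ((m : ℂ) * (Complex.exp ((-ξ * x : ℝ) * Complex.I) * (x : ℂ) ^ (m - 1)) -
        ξ * Complex.I * (Complex.exp ((-ξ * x : ℝ) * Complex.I) * (x : ℂ) ^ m)) x := by
  have h1 : HasDerivAt (fun x : ℝ => ((-ξ * x : ℝ) : ℂ) * Complex.I)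
      (((-ξ * 1 : ℝ) : ℂ) * Complex.I) x :=
    ((hasDerivAt_id x).const_mul (-ξ)).ofReal_comp.mul_const _
  have h2 : HasDerivAt (fun x : ℝ => (x : ℂ) ^ m) ((m : ℂ) * (x : ℂ) ^ (m - 1)) x := by
    simpa using (hasDerivAt_pow m (x : ℂ)).comp_ofReal
  refine (h1.cexp.mul h2).congr_deriv ?_
  push_cast
  ring

theorem integral_fspline_smul_deriv_exp_mul_pow (s k m : ℕ) (ξ : ℝ) :
    ∫ x in (-1 : ℝ)..1, fspline s k x •
      ((m : ℂ) * (Complex.exp ((-ξ * x : ℝ) * Complex.I) * (x : ℂ) ^ (m - 1)) -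
        ξ * Complex.I * (Complex.exp ((-ξ * x : ℝ) * Complex.I) * (x : ℂ) ^ m)) =
      m * splineFourier s k (m - 1) ξ - ξ * Complex.I * splineFourier s k m ξ := by
  have hinteg : ∀ m : ℕ, IntervalIntegrable (fun x => fspline s k x •
      (Complex.exp ((-ξ * x : ℝ) * Complex.I) * (x : ℂ) ^ m)) volume (-1) 1 := fun m =>
    (intervalIntegrable_fspline s k _ _).smul_continuousOn (by fun_prop)
  rw [splineFourier, splineFourier, ← intervalIntegral.integral_const_mul,
    ← intervalIntegral.integral_const_mul,
    ← intervalIntegral.integral_sub ((hinteg _).const_mul _) ((hinteg _).const_mul _)]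
  simp only [smul_sub, mul_smul_comm]

theorem norm_le_of_sub_eq {a b c : ℂ} {ξ : ℝ} {m : ℕ} (h : m * a - ξ * Complex.I * b = c) :
    ‖b‖ * |ξ| ≤ ‖c‖ + m * ‖a‖ := by
  have : ξ * Complex.I * b = m * a - c := by rw [← h]; ring
  calc ‖b‖ * |ξ| = ‖ξ * Complex.I * b‖ := by simp [mul_comm]
    _ ≤ ‖(m : ℂ) * a‖ + ‖c‖ := by rw [this]; exact norm_sub_le _ _
    _ = ‖c‖ + m * ‖a‖ := by rw [norm_mul, Complex.norm_natCast, add_comm]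

/-- The Fourier integrals decay at the rate of the smoothness order of the spline. -/
theorem norm_splineFourier_mul_le (hs_even : Even s) {ξ : ℝ} (hξ : 12 * s ≤ |ξ|) {k : ℕ}
    (hk : k < s) {m : ℕ} (hm : m ≤ 4) :
    ‖splineFourier s k m ξ‖ * |ξ| ^ (k + 1) ≤ 2 * s + 2 * (k + 1) := by
  have hs : s ≠ 0 := by omega
  have hs0 : (1 : ℝ) ≤ s := by exact_mod_cast (show 1 ≤ s by omega)
  have hξ0 : 0 < |ξ| := by linarith
  have hcont : ∀ m : ℕ, Continuous fun x : ℝ =>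
      (m : ℂ) * (Complex.exp ((-ξ * x : ℝ) * Complex.I) * (x : ℂ) ^ (m - 1)) -
        ξ * Complex.I * (Complex.exp ((-ξ * x : ℝ) * Complex.I) * (x : ℂ) ^ m) := by
    intro m
    fun_prop
  have hlower : ∀ k < s, ∀ m ≤ 4,
      (m ≠ 0 → ‖splineFourier s k (m - 1) ξ‖ * |ξ| ^ (k + 1) ≤ 2 * s + 2 * (k + 1)) →
      m * ‖splineFourier s k (m - 1) ξ‖ * |ξ| ^ k ≤ 2 := by
    intro k hk m hm h
    rcases eq_or_ne m 0 with rfl | hm0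
    · simp
    · have hk' : (k : ℝ) + 1 ≤ s := by exact_mod_cast hk
      have hm' : (m : ℝ) ≤ 4 := by exact_mod_cast hm
      have h1 := h hm0
      rw [pow_succ, ← mul_assoc] at h1
      set z := ‖splineFourier s k (m - 1) ξ‖ * |ξ| ^ k
      have hz : 0 ≤ z := by positivity
      have h2 : z * (12 * s) ≤ 4 * s := by nlinarith
      have h3 : z ≤ 1 / 3 := by nlinarith
      rw [mul_assoc]
      change m * z ≤ 2
      nlinarith
  induction k generalizing m with
  | zero =>
    have hbase : ∀ m : ℕ, ‖splineFourier s 0 m ξ‖ * |ξ| ≤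
        2 * s + m * ‖splineFourier s 0 (m - 1) ξ‖ := by
      intro m
      refine (norm_le_of_sub_eq ((integral_fspline_smul_deriv_exp_mul_pow s 0 m ξ).symm.trans
        (integral_fspline_zero_smul_deriv hs (hasDerivAt_exp_mul_pow ξ m) (hcont m)))).trans ?_
      gcongr
      refine (norm_sum_le _ _).trans ((Finset.sum_le_card_nsmul _ _ 2 fun j _ => ?_).trans ?_)
      · rw [norm_smul, norm_pow, norm_neg, norm_one, one_pow, one_mul]
        refine (norm_sub_le _ _).trans ?_
        have h1 := norm_exp_mul_pow_le_one ξ m (abs_chebNode_le_one s j)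
        have h2 := norm_exp_mul_pow_le_one ξ m (abs_chebNode_le_one s (j + 1))
        linarith
      · rw [Finset.card_range, nsmul_eq_mul, mul_comm]
    induction m with
    | zero =>
      have := hbase 0
      simp at this ⊢
      linarith
    | succ m ihm =>
      have h1 := hbase (m + 1)
      have h2 := hlower 0 hk (m + 1) hm fun _ => ihm (by omega)
      simp at h1 h2 ⊢
      linarith
  | succ k ih =>
    have hstep : ∀ m : ℕ, ‖splineFourier s (k + 1) m ξ‖ * |ξ| ≤
        ‖splineFourier s k m ξ‖ + m * ‖splineFourier s (k + 1) (m - 1) ξ‖ := by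
      intro m
      have h := norm_le_of_sub_eq
        ((integral_fspline_smul_deriv_exp_mul_pow s (k + 1) m ξ).symm.trans
        (integral_fspline_succ_smul_deriv hs (fspline_one_eq_zero hs_even hk)
          (hasDerivAt_exp_mul_pow ξ m) (hcont m)))
      rwa [norm_neg] at h
    have hmul : ∀ m ≤ 4, (m ≠ 0 → ‖splineFourier s (k + 1) (m - 1) ξ‖ * |ξ| ^ (k + 1 + 1) ≤
        2 * s + 2 * ((k + 1 : ℕ) + 1)) → ‖splineFourier s (k + 1) m ξ‖ * |ξ| ^ (k + 1 + 1) ≤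
        2 * s + 2 * ((k + 1 : ℕ) + 1) := by
      intro m hm h
      have h1 := hlower (k + 1) hk m hm h
      have h2 := ih (by omega) hm
      have h3 := mul_le_mul_of_nonneg_right (hstep m) (pow_nonneg hξ0.le (k + 1))
      push_cast
      rw [pow_succ _ (k + 1)]
      linarith
    induction m with
    | zero => exact hmul 0 hm fun h => absurd rfl h
    | succ m ihm => exact hmul (m + 1) hm fun _ => ihm (by omega)

end SplineFourier

section SplinePoisson

open MeasureTheory FourierTransform

variable {s : ℕ}

/-- The weighted spline `x ^ m g(x)`, dilated by `M` and extended by zero. -/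
noncomputable def dilatedSpline (s m : ℕ) (M x : ℝ) : ℂ :=
  (Set.Icc (-1 : ℝ) 1).indicator
    (fun x => ((fspline s (s - 1) x * x ^ m : ℝ) : ℂ)) (x / M)

theorem dilatedSpline_of_le_abs (hs_even : Even s) (hs : 2 ≤ s) (m : ℕ) {M x : ℝ} (hM : 0 < M)
    (hx : M ≤ |x|) : dilatedSpline s m M x = 0 := by
  obtain ⟨k, rfl⟩ := Nat.exists_eq_add_of_le' hs
  rw [dilatedSpline]
  refine Set.indicator_apply_eq_zero.2 fun hmem => ?_
  have habs : 1 ≤ |x / M| := by rwa [abs_div, abs_of_pos hM, one_le_div hM]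
  have hends : x / M = 1 ∨ x / M = -1 := by
    rcases le_abs.1 habs with h | h
    · exact Or.inl (le_antisymm hmem.2 h)
    · exact Or.inr (le_antisymm (by linarith) hmem.1)
  have h1 : fspline (k + 2) (k + 1) 1 = 0 := fspline_one_eq_zero hs_even (by omega)
  rcases hends with h | h <;> rw [h] <;>
    simp [show k + 2 - 1 = k + 1 by omega, h1, fspline_succ_neg_one]

theorem continuous_dilatedSpline (hs_even : Even s) (hs : 2 ≤ s) (m : ℕ) (M : ℝ) :
    Continuous (dilatedSpline s m M) := by
  obtain ⟨k, rfl⟩ := Nat.exists_eq_add_of_le' hs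
  have h1 : fspline (k + 2) (k + 1) 1 = 0 := fspline_one_eq_zero hs_even (by omega)
  refine (continuous_indicator (fun a ha => ?_) ?_).comp (continuous_id.div_const M)
  · rw [frontier_Icc (by norm_num)] at ha
    rcases ha with rfl | rfl <;>
      simp [show k + 2 - 1 = k + 1 by omega, h1, fspline_succ_neg_one]
  · exact (Complex.continuous_ofReal.comp
      ((continuous_fspline_succ (k + 2) k).mul (continuous_pow m))).continuousOn

theorem fourier_dilatedSpline (s m : ℕ) {M : ℝ} (hM : 0 < M) (w : ℝ) :
    𝓕 (dilatedSpline s m M) w = M * splineFourier s (s - 1) m (2 * π * M * w) := by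
  rw [Real.fourier_real_eq_integral_exp_smul]
  have h : ∀ v : ℝ, Complex.exp ((-2 * π * v * w : ℝ) * Complex.I) • dilatedSpline s m M v =
      (Set.Icc (-1 : ℝ) 1).indicator (fun x => fspline s (s - 1) x •
        (Complex.exp ((-(2 * π * M * w) * x : ℝ) * Complex.I) * (x : ℂ) ^ m)) (v / M) := by
    intro v
    rw [dilatedSpline, Set.indicator_apply, Set.indicator_apply]
    split_ifs
    · have : -2 * π * v * w = -(2 * π * M * w) * (v / M) := by field_simp
      rw [this, Complex.real_smul, smul_eq_mul]
      push_cast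
      ring
    · rw [smul_zero]
  simp_rw [h]
  rw [Measure.integral_comp_div (fun y => (Set.Icc (-1 : ℝ) 1).indicator (fun x =>
      fspline s (s - 1) x •
        (Complex.exp ((-(2 * π * M * w) * x : ℝ) * Complex.I) * (x : ℂ) ^ m)) y),
    integral_indicator measurableSet_Icc, integral_Icc_eq_integral_Ioc,
    ← intervalIntegral.integral_of_le (by norm_num), abs_of_pos hM, Complex.real_smul]
  rfl

theorem splineFourier_zero_right (s m : ℕ) :
    splineFourier s (s - 1) m 0 = (splineMoment s m : ℂ) := by
  rw [splineFourier, splineMoment, ← intervalIntegral.integral_ofReal]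
  refine intervalIntegral.integral_congr fun x _ => ?_
  simp

theorem hasSum_int_one_div_sq : HasSum (fun l : ℤ => 1 / (l : ℝ) ^ 2) (π ^ 2 / 3) := by
  have h1 := (hasSum_nat_add_iff' 1).2 hasSum_zeta_two
  simp only [Finset.range_one, Finset.sum_singleton, Nat.cast_zero, ne_eq, OfNat.ofNat_ne_zero,
    not_false_eq_true, zero_pow, div_zero, sub_zero] at h1
  have h2 := HasSum.of_nat_of_neg_add_one (f := fun l : ℤ => 1 / (l : ℝ) ^ 2)
    (m := π ^ 2 / 6) (m' := π ^ 2 / 6) (by simpa using hasSum_zeta_two)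
    (h1.congr_fun fun n => by push_cast; ring)
  rwa [show π ^ 2 / 6 + π ^ 2 / 6 = π ^ 2 / 3 by ring] at h2

theorem norm_fourier_dilatedSpline_le (hs_even : Even s) (hs : 2 ≤ s) {m : ℕ} (hm : m ≤ 4)
    {M : ℝ} (hM : 2 * s ≤ M) {l : ℤ} (hl : l ≠ 0) :
    ‖𝓕 (dilatedSpline s m M) l‖ ≤ M * (4 * s / (2 * π * M) ^ s) * (1 / (l : ℝ) ^ 2) := by
  have hs0 : (2 : ℝ) ≤ s := by exact_mod_cast hs
  have hM0 : 0 < M := by linarith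
  have hl1 : (1 : ℝ) ≤ |(l : ℝ)| := by exact_mod_cast Int.one_le_abs hl
  have habs : |2 * π * M * l| = 2 * π * M * |(l : ℝ)| := by
    rw [abs_mul, abs_of_pos (by positivity)]
  have hbig : 12 * (s : ℝ) ≤ |2 * π * M * l| := by
    rw [habs]
    have := Real.pi_gt_three
    have h1 : 12 * (s : ℝ) ≤ 2 * π * M := by nlinarith
    nlinarith
  have h := norm_splineFourier_mul_le hs_even hbig (show s - 1 < s by omega) hm
  have hcast : ((s - 1 : ℕ) : ℝ) + 1 = s := by
    rw [Nat.cast_sub (by omega)]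
    simp
  rw [hcast, show s - 1 + 1 = s by omega, habs, mul_pow] at h
  have hpow : (l : ℝ) ^ 2 ≤ |(l : ℝ)| ^ s := by
    rw [← sq_abs]
    exact pow_le_pow_right₀ hl1 hs
  have hl2 : (0 : ℝ) < (l : ℝ) ^ 2 := by positivity
  rw [fourier_dilatedSpline s m hM0, norm_mul, Complex.norm_real, Real.norm_of_nonneg hM0.le,
    mul_assoc M]
  refine mul_le_mul_of_nonneg_left ?_ hM0.le
  rw [div_mul_div_comm, mul_one, le_div_iff₀ (by positivity)]
  refine le_trans ?_ (h.trans (by linarith))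
  gcongr

/-- Poisson summation: Riemann sums of the weighted spline agree with the moments up to a tail. -/
theorem abs_sum_sub_splineMoment_le (hs_even : Even s) (hs : 2 ≤ s) {m : ℕ} (hm : m ≤ 4) {N : ℕ}
    (hN : 2 * s ≤ N) :
    |∑ k ∈ Finset.Icc (-(N : ℤ)) N, fspline s (s - 1) (k / ((N : ℝ) + 1)) *
        ((k : ℝ) / ((N : ℝ) + 1)) ^ m - ((N : ℝ) + 1) * splineMoment s m| ≤
      ((N : ℝ) + 1) * (16 * s / (2 * π * ((N : ℝ) + 1)) ^ s) := by
  set M : ℝ := (N : ℝ) + 1 with hMdef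
  have hM0 : 0 < M := by positivity
  have hNs : 2 * (s : ℝ) ≤ M := by
    have : 2 * (s : ℝ) ≤ N := by exact_mod_cast hN
    linarith
  set F : ℤ → ℂ := fun l => 𝓕 (dilatedSpline s m M) (l : ℝ) with hF
  set C : ℝ := M * (4 * s / (2 * π * M) ^ s) with hC
  have hC0 : 0 ≤ C := by positivity
  have hbound : ∀ l : ℤ, ‖if l = 0 then 0 else F l‖ ≤ C * (1 / (l : ℝ) ^ 2) := by
    intro l
    split_ifs with hl
    · simp [hl]
    · exact norm_fourier_dilatedSpline_le hs_even hs hm hNs hl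
  have hsq := hasSum_int_one_div_sq.mul_left C
  have hsum0 : Summable fun l : ℤ => if l = 0 then 0 else F l :=
    Summable.of_norm_bounded hsq.summable hbound
  have hsum : Summable F := by
    refine (summable_congr_cofinite ?_).1 hsum0
    filter_upwards [(Set.finite_singleton (0 : ℤ)).compl_mem_cofinite] with l hl
    exact if_neg hl
  have hzero : F 0 = M * (splineMoment s m : ℂ) := by
    simp only [hF]
    rw [fourier_dilatedSpline s m hM0, Int.cast_zero, mul_zero, splineFourier_zero_right]
  have hpoisson := Real.tsum_eq_tsum_fourier_of_rpow_decay_of_summable (b := 2)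
    (continuous_dilatedSpline hs_even hs m M) (by norm_num)
    (Filter.EventuallyEq.trans_isBigO (f₂ := fun _ => (0 : ℂ)) (by
      filter_upwards [tendsto_norm_cocompact_atTop.eventually_ge_atTop M] with x hx
      exact dilatedSpline_of_le_abs hs_even hs m hM0 hx) (Asymptotics.isBigO_zero _ _)) hsum 0
  simp only [zero_add, QuotientAddGroup.mk_zero, fourier_eval_zero, mul_one] at hpoisson
  rw [tsum_eq_sum (s := Finset.Icc (-(N : ℤ)) N) (fun k hk =>
    dilatedSpline_of_le_abs hs_even hs m hM0 (by
      have : (N : ℤ) + 1 ≤ |k| := by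
        by_contra! h
        exact hk (Finset.mem_Icc.2 (abs_le.1 (by omega)))
      rw [hMdef]
      exact_mod_cast this))] at hpoisson
  have hterm : ∀ k ∈ Finset.Icc (-(N : ℤ)) N, dilatedSpline s m M k =
      ((fspline s (s - 1) (k / M) * ((k : ℝ) / M) ^ m : ℝ) : ℂ) := by
    intro k hk
    rw [dilatedSpline, Set.indicator_of_mem]
    have hk := Finset.mem_Icc.1 hk
    have h1 : -(N : ℝ) ≤ k := by exact_mod_cast hk.1
    have h2 : (k : ℝ) ≤ N := by exact_mod_cast hk.2
    constructor
    · rw [le_div_iff₀ hM0]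
      linarith
    · rw [div_le_iff₀ hM0]
      linarith
  rw [Finset.sum_congr rfl hterm, ← Complex.ofReal_sum] at hpoisson
  have htsum : ∑' l, F l = F 0 + ∑' l, if l = 0 then 0 else F l := hsum.tsum_eq_add_tsum_ite 0
  have hdiff : ((∑ k ∈ Finset.Icc (-(N : ℤ)) N, fspline s (s - 1) (k / M) *
      ((k : ℝ) / M) ^ m - M * splineMoment s m : ℝ) : ℂ) = ∑' l, if l = 0 then 0 else F l := by
    rw [Complex.ofReal_sub, hpoisson]
    push_cast
    rw [← hzero]
    linear_combination htsum
  rw [← Real.norm_eq_abs, ← Complex.norm_real, hdiff]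
  refine (tsum_of_norm_bounded hsq hbound).trans ?_
  have hpi : π ^ 2 / 3 ≤ 4 := by nlinarith [Real.pi_lt_d2, Real.pi_pos]
  calc C * (π ^ 2 / 3) ≤ C * 4 := by gcongr
    _ = _ := by rw [hC]; ring

end SplinePoisson

section WeightBounds

variable {s N : ℕ}

theorem two_pow_mul_factorial_le_pow_self {n : ℕ} (hn : 6 ≤ n) :
    2 ^ n * n.factorial ≤ n ^ n := by
  induction n, hn using Nat.le_induction with
  | base => decide
  | succ n hn ih =>
    have hbern : 2 * n ^ n ≤ (n + 1) ^ n := by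
      have hinv : (0 : ℝ) ≤ 1 / n := by positivity
      have h := one_add_mul_le_pow (a := 1 / (n : ℝ)) (by linarith) n
      have hn0 : (n : ℝ) ≠ 0 := by
        have : n ≠ 0 := by omega
        exact_mod_cast this
      rw [mul_one_div_cancel hn0, one_add_div hn0, div_pow, le_div_iff₀ (by positivity)] at h
      have h' : (2 : ℝ) * n ^ n ≤ (n + 1) ^ n := by linarith
      exact_mod_cast h'
    calc 2 ^ (n + 1) * (n + 1).factorial = 2 * (2 ^ n * n.factorial) * (n + 1) := by
          rw [Nat.factorial_succ]; ring
      _ ≤ 2 * n ^ n * (n + 1) := by gcongr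
      _ ≤ (n + 1) ^ n * (n + 1) := by gcongr
      _ = (n + 1) ^ (n + 1) := by ring

theorem mul_le_twelve_pow {n : ℕ} (hn : 6 ≤ n) :
    32000 * ((n + 1) * (n + 2)) ≤ 3 * 12 ^ n := by
  induction n, hn using Nat.le_induction with
  | base => decide
  | succ n hn ih =>
    rw [pow_succ]
    nlinarith

theorem mul_factorial_le_pow (hs : 6 ≤ s) {M : ℝ} (hM : 2 * s ≤ M) :
    32000 * ((s + 1) * (s + 2)) * (s.factorial : ℝ) ≤ 3 * (π * M) ^ s := by
  have h1 : (2 : ℝ) ^ s * s.factorial ≤ (s : ℝ) ^ s := by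
    exact_mod_cast two_pow_mul_factorial_le_pow_self hs
  have h2 : (32000 : ℝ) * ((s + 1) * (s + 2)) ≤ 3 * 12 ^ s := by
    exact_mod_cast mul_le_twelve_pow hs
  have hsix : 6 * (s : ℝ) ≤ π * M := by nlinarith [Real.pi_gt_three, Nat.cast_nonneg (α := ℝ) s]
  calc 32000 * ((s + 1) * (s + 2)) * (s.factorial : ℝ) ≤ 3 * 12 ^ s * s.factorial := by gcongr
    _ = 3 * 6 ^ s * (2 ^ s * s.factorial) := by
        rw [show (12 : ℝ) = 6 * 2 by norm_num, mul_pow]; ring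
    _ ≤ 3 * 6 ^ s * (s : ℝ) ^ s := by gcongr
    _ = 3 * (6 * s) ^ s := by rw [mul_pow]; ring
    _ ≤ 3 * (π * M) ^ s := by gcongr

/-- The Poisson tail is negligible against the moments. -/
theorem poisson_tail_le (hs_even : Even s) (hs : 6 ≤ s) {M : ℝ} (hM : 2 * s ≤ M) :
    2 * (16 * s / (2 * π * M) ^ s) ≤
      0.001 * (3 / (4 * (s + 2) * (s + 1))) * splineMoment s 0 := by
  have h := mul_factorial_le_pow hs hM
  have hs0 : (0 : ℝ) < s := by exact_mod_cast (show 0 < s by omega)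
  have hM0 : 0 < M := by linarith
  rw [splineMoment_zero hs_even (by omega), show 2 * π * M = 2 * (π * M) by ring, mul_pow]
  rw [show (0.001 : ℝ) * (3 / (4 * (s + 2) * (s + 1))) * (4 * s / (2 ^ s * s.factorial)) =
    3 * s / (1000 * ((s + 1) * (s + 2)) * (2 ^ s * s.factorial)) by field_simp; norm_num,
    show (2 : ℝ) * (16 * s / (2 ^ s * (π * M) ^ s)) = 32 * s / (2 ^ s * (π * M) ^ s) by ring,
    div_le_div_iff₀ (by positivity) (by positivity)]
  calc 32 * (s : ℝ) * (1000 * ((s + 1) * (s + 2)) * (2 ^ s * s.factorial)) =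
      s * 2 ^ s * (32000 * ((s + 1) * (s + 2)) * (s.factorial : ℝ)) := by ring
    _ ≤ s * 2 ^ s * (3 * (π * M) ^ s) := by gcongr
    _ = _ := by ring

/-- Riemann sums of the weighted spline. -/
noncomputable def splineSum (s N m : ℕ) : ℝ :=
  ∑ k ∈ Finset.Icc (-(N : ℤ)) N, fspline s (s - 1) (k / ((N : ℝ) + 1)) *
    ((k : ℝ) / ((N : ℝ) + 1)) ^ m

theorem gtilde_div (s N : ℕ) (k : ℤ) :
    gtilde s ((k : ℝ) / (2 * ((N : ℝ) + 1))) = fspline s (s - 1) (k / ((N : ℝ) + 1)) := by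
  rw [gtilde]
  congr 1
  field_simp

theorem gnorm_eq_splineSum (s N : ℕ) : gnorm s N = splineSum s N 0 := by
  simp only [gnorm, splineSum, gtilde_div, pow_zero, mul_one]

theorem sum_sigmaWeight_mul_pow (s N m : ℕ) :
    ∑ k ∈ Finset.Icc (-(N : ℤ)) N, sigmaWeight s N k * (k : ℝ) ^ m =
      splineSum s N m / splineSum s N 0 * ((N : ℝ) + 1) ^ m := by
  rw [← gnorm_eq_splineSum, splineSum, Finset.sum_div, Finset.sum_mul]
  refine Finset.sum_congr rfl fun k _ => ?_
  rw [sigmaWeight, gtilde_div, div_pow]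
  field_simp

theorem splineMoment_zero_pos (hs_even : Even s) (hs : s ≠ 0) : 0 < splineMoment s 0 := by
  rw [splineMoment_zero hs_even hs]
  have : (0 : ℝ) < s := by exact_mod_cast Nat.pos_of_ne_zero hs
  positivity

theorem splineSum_le (hs_even : Even s) (hs : 6 ≤ s) (hN : 2 * s ≤ N) {m : ℕ} (hm : m ≤ 4)
    {μ : ℝ} (hmom : splineMoment s m = splineMoment s 0 * μ)
    (hμ : 3 / (4 * (s + 2) * (s + 1)) ≤ μ) (hμ1 : μ ≤ 1 / 2) :
    0 < splineSum s N 0 ∧ splineSum s N m ≤ 1.001 * μ * splineSum s N 0 := by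
  have hM0 : (0 : ℝ) < (N : ℝ) + 1 := by positivity
  have hNs : 2 * (s : ℝ) ≤ (N : ℝ) + 1 := by
    have : 2 * (s : ℝ) ≤ N := by exact_mod_cast hN
    linarith
  have hpos := splineMoment_zero_pos hs_even (by omega)
  have htail := poisson_tail_le hs_even hs hNs
  have h0 := (abs_le.1 (abs_sum_sub_splineMoment_le hs_even (by omega) (Nat.zero_le 4) hN)).1
  have hmsum := (abs_le.1 (abs_sum_sub_splineMoment_le hs_even (by omega) hm hN)).2
  rw [← splineSum] at h0 hmsum
  rw [hmom] at hmsum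
  set M : ℝ := (N : ℝ) + 1
  set D : ℝ := 16 * s / (2 * π * M) ^ s
  have hD : 0 ≤ D := by positivity
  have hμ0 : 0 < μ := lt_of_lt_of_le (by positivity) hμ
  have htail' : 2 * D ≤ 0.001 * μ * splineMoment s 0 := htail.trans (by gcongr)
  have hMD : 2 * (M * D) ≤ 0.001 * μ * (M * splineMoment s 0) := by
    nlinarith [mul_le_mul_of_nonneg_left htail' hM0.le]
  have hMD0 : 0 ≤ M * D := by positivity
  have hMp : 0 < M * splineMoment s 0 := by positivity
  constructor
  · nlinarith
  · nlinarith

theorem ratio_four_le_ratio_two (hs : 6 ≤ s) :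
    3 / (4 * ((s : ℝ) + 2) * (s + 1)) ≤ 1 / (2 * (s + 1)) := by
  have : (6 : ℝ) ≤ s := by exact_mod_cast hs
  rw [div_le_div_iff₀ (by positivity) (by positivity)]
  nlinarith

theorem ratio_two_le_half : 1 / (2 * ((s : ℝ) + 1)) ≤ 1 / 2 := by
  have : (0 : ℝ) ≤ s := Nat.cast_nonneg s
  gcongr
  linarith

theorem sum_sigmaWeight_sq_le (s N : ℕ) (hs_even : Even s) (hs : 6 ≤ s) (hN : 2 * s ≤ N) :
    ∑ k ∈ Finset.Icc (-(N : ℤ)) N, sigmaWeight s N k * (k : ℝ) ^ 2 ≤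
      1.001 / (2 * ((s : ℝ) + 1)) * ((N : ℝ) + 1) ^ 2 := by
  obtain ⟨hpos, hle⟩ := splineSum_le hs_even hs hN (by norm_num)
    (splineMoment_two hs_even (by omega)) (ratio_four_le_ratio_two hs) ratio_two_le_half
  rw [sum_sigmaWeight_mul_pow]
  refine mul_le_mul_of_nonneg_right ?_ (by positivity)
  rw [div_le_iff₀ hpos]
  exact hle.trans_eq (by ring)

theorem sum_sigmaWeight_pow_four_le (s N : ℕ) (hs_even : Even s) (hs : 6 ≤ s)
    (hN : 2 * s ≤ N) :
    ∑ k ∈ Finset.Icc (-(N : ℤ)) N, sigmaWeight s N k * (k : ℝ) ^ 4 ≤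
      3 * 1.001 / (4 * ((s : ℝ) + 2) * ((s : ℝ) + 1)) * ((N : ℝ) + 1) ^ 4 := by
  obtain ⟨hpos, hle⟩ := splineSum_le hs_even hs hN le_rfl
    (splineMoment_four hs_even (by omega)) le_rfl
    ((ratio_four_le_ratio_two hs).trans ratio_two_le_half)
  rw [sum_sigmaWeight_mul_pow]
  refine mul_le_mul_of_nonneg_right ?_ (by positivity)
  rw [div_le_iff₀ hpos]
  exact hle.trans_eq (by ring)

theorem sigmaWeight_nonneg (s N : ℕ) (hs_even : Even s) (hs : 6 ≤ s) (k : ℤ)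
    (hk : k ∈ Finset.Icc (-(N : ℤ)) N) : 0 ≤ sigmaWeight s N k := by
  have hnonneg : ∀ k ∈ Finset.Icc (-(N : ℤ)) N,
      0 ≤ gtilde s ((k : ℝ) / (2 * ((N : ℝ) + 1))) := by
    intro k hk
    rw [gtilde_div]
    have hM0 : (0 : ℝ) < (N : ℝ) + 1 := by positivity
    have hk := Finset.mem_Icc.1 hk
    have h1 : -(N : ℝ) ≤ k := by exact_mod_cast hk.1
    have h2 : (k : ℝ) ≤ N := by exact_mod_cast hk.2
    refine fspline_nonneg hs_even (by omega) ⟨?_, ?_⟩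
    · rw [lt_div_iff₀ hM0]
      linarith
    · rw [div_lt_iff₀ hM0]
      linarith
  exact div_nonneg (hnonneg k hk) (Finset.sum_nonneg hnonneg)

end WeightBounds

theorem lipschitz_type_kernel_bounds_near_zero
    (s N : ℕ) (hs_even : Even s) (hs : 6 ≤ s) (hN : 2 * s ≤ N)
    (δ : ℝ) (hδ0 : 0 ≤ δ) (hδπ : δ ≤ π / 2)
    (x y : Mat3) (hx : IsSO3 x) (hy : IsSO3 y)
    (hnear : rotAngle (y⁻¹ * x) ≤ δ / ((N : ℝ) + 1)) :
    (∀ i k : Fin 3,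
      (|Xx i (Xx i (sigmaK s N)) x y - iteratedDeriv 2 (sigmaT s N) 0| ≤
          (3 * 1.001 / (4 * ((s : ℝ) + 2) * ((s : ℝ) + 1)) / 2) * ((N : ℝ) + 1) ^ 2 * δ ^ 2) ∧
      |Xx i (Xx i (Xy k (sigmaK s N))) x y| ≤
        (3 * 1.001 / (4 * ((s : ℝ) + 2) * ((s : ℝ) + 1))) *
            (((N : ℝ) + 1) ^ 3 * δ + (1 / 4) * ((N : ℝ) + 1) ^ 2 * δ ^ 2)
          + (1.001 / (2 * ((s : ℝ) + 1)) / 4) * ((N : ℝ) + 1) * δ) ∧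
    (∀ i j n : Fin 3, i ≠ j → j ≠ n → i ≠ n →
      (|Xx j (Xx i (sigmaK s N)) x y - (eps3 j i n / 2) * Xx n (sigmaK s N) x y| ≤
          (3 * 1.001 / (4 * ((s : ℝ) + 2) * ((s : ℝ) + 1)) / 4) * ((N : ℝ) + 1) ^ 2 * δ ^ 2) ∧
      ∀ k : Fin 3, k = i ∨ k = j ∨ k = n →
        |Xx j (Xx i (Xy k (sigmaK s N))) x y
            - (eps3 j i n / 2) * Xx n (Xy k (sigmaK s N)) x y| ≤
          (3 * 1.001 / (4 * ((s : ℝ) + 2) * ((s : ℝ) + 1))) *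
              (((N : ℝ) + 1) ^ 3 * δ + (1 / 4) * ((N : ℝ) + 1) ^ 2 * δ ^ 2)
            + (1.001 / (2 * ((s : ℝ) + 1)) / 4) * ((N : ℝ) + 1) * δ) := by
  have hA₂ := sum_sigmaWeight_sq_le s N hs_even hs hN
  have hA₄ := sum_sigmaWeight_pow_four_le s N hs_even hs hN
  have hσ := iteratedDeriv_two_sigmaT s N
  have hM : (1 : ℝ) ≤ (N : ℝ) + 1 := by linarith [Nat.cast_nonneg (α := ℝ) N]
  have hz := hy.transpose.mul hx
  rw [hy.inv_eq] at hnear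
  have ht0 : 0 ≤ rotAngle (y.transpose * x) := Real.arccos_nonneg _
  have htM : rotAngle (y.transpose * x) * ((N : ℝ) + 1) ≤ δ := (le_div_iff₀ (by linarith)).1 hnear
  have ht : rotAngle (y.transpose * x) ≤ π / 2 := by nlinarith
  have hb := profileBounds_chebSum (I := Finset.Icc (-(N : ℤ)) N) (w := sigmaWeight s N)
    (fun k hk => sigmaWeight_nonneg s N hs_even hs k hk) ht0 ht
  have hcos : Real.cos (rotAngle (y.transpose * x)) = (Matrix.trace (y.transpose * x) - 1) / 2 :=
    Real.cos_arccos hz.trace_mem.1 hz.trace_mem.2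
  obtain ⟨m, hm, hzm⟩ := hz.exists_eq_rodrigues hcos.symm (by linarith [hb.cos_nonneg])
    (Real.sin_sq_add_cos_sq (rotAngle (y.transpose * x)))
  have hXx : ∀ i, ∀ x y, IsSO3 x → IsSO3 y → Xx i (sigmaK s N) x y =
      Xx i (polyKernel (chebSum (Finset.Icc (-(N : ℤ)) N) (sigmaWeight s N))) x y := fun i x y =>
    Xx_congr (fun _ _ => sigmaK_eq_polyKernel s N) i x y
  have hXy : ∀ i, ∀ x y, IsSO3 x → IsSO3 y → Xy i (sigmaK s N) x y =
      Xy i (polyKernel (chebSum (Finset.Icc (-(N : ℤ)) N) (sigmaWeight s N))) x y := fun i x y =>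
    Xy_congr (fun _ _ => sigmaK_eq_polyKernel s N) i x y
  have hXxXy : ∀ i k, ∀ x y, IsSO3 x → IsSO3 y → Xx i (Xy k (sigmaK s N)) x y =
      Xx i (Xy k (polyKernel (chebSum (Finset.Icc (-(N : ℤ)) N) (sigmaWeight s N)))) x y :=
    fun i k x y => Xx_congr (hXy k) i x y
  generalize chebSum (Finset.Icc (-(N : ℤ)) N) (sigmaWeight s N) = P at hb hXx hXy hXxXy
  generalize (∑ k ∈ Finset.Icc (-(N : ℤ)) N, sigmaWeight s N k * (k : ℝ) ^ 2) = A₂ at *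
  generalize (∑ k ∈ Finset.Icc (-(N : ℤ)) N, sigmaWeight s N k * (k : ℝ) ^ 4) = A₄ at *
  generalize hd : 3 * 1.001 / (4 * ((s : ℝ) + 2) * ((s : ℝ) + 1)) = d at *
  generalize hc : 1.001 / (2 * ((s : ℝ) + 1)) = c at *
  generalize rotAngle (y.transpose * x) = t at *
  generalize (N : ℝ) + 1 = M at *
  have hpoly : ∀ Q : Polynomial ℝ, polyKernel Q x y = Q.eval (Real.cos t) := fun Q => by
    rw [polyKernel, hcos]
  have hd0 : 0 ≤ d := by rw [← hd]; positivity
  have hc0 : 0 ≤ c := by rw [← hc]; positivity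
  have hsq : A₄ * t ^ 2 ≤ d * M ^ 2 * δ ^ 2 := by
    calc A₄ * t ^ 2 ≤ d * M ^ 4 * t ^ 2 := by gcongr
      _ = d * M ^ 2 * (t * M) ^ 2 := by ring
      _ ≤ d * M ^ 2 * δ ^ 2 := by gcongr
  have hfirst : A₄ * t ≤ d * M ^ 3 * δ := by
    calc A₄ * t ≤ d * M ^ 4 * t := by gcongr
      _ = d * M ^ 3 * (t * M) := by ring
      _ ≤ d * M ^ 3 * δ := by gcongr
  have hfirst' : A₂ * t ≤ c * M * δ := by
    calc A₂ * t ≤ c * M ^ 2 * t := by gcongr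
      _ = c * M * (t * M) := by ring
      _ ≤ c * M * δ := by gcongr
  have hthird : A₄ * t + 1 / 4 * (A₄ * t ^ 2) + 1 / 4 * (A₂ * t) ≤
      d * (M ^ 3 * δ + 1 / 4 * M ^ 2 * δ ^ 2) + c / 4 * M * δ := by linarith
  refine ⟨fun i k => ⟨?_, ?_⟩, fun i j n hij hjn hin => ⟨?_, fun k hk => ?_⟩⟩
  · rw [Xx_congr (hXx i) i x y hx hy, Xx_Xx_polyKernel, hpoly, hpoly, hzm, hσ, sub_neg_eq_add]
    refine (hb.abs_secondForm_diag_le hm i).trans ?_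
    linarith
  · rw [Xx_congr (hXxXy i k) i x y hx hy, Xx_Xx_Xy_polyKernel P i i k x y _ rfl, hpoly, hpoly,
      hpoly, hzm]
    exact (hb.abs_thirdForm_diag_le hm i k).trans hthird
  · rw [Xx_congr (hXx i) j x y hx hy, Xx_Xx_polyKernel, hXx n x y hx hy, Xx_polyKernel]
    simp only [hpoly, hzm]
    refine (hb.abs_secondForm_offDiag_le hm hij hjn hin).trans ?_
    linarith
  · rw [Xx_congr (hXxXy i k) j x y hx hy, Xx_Xx_Xy_polyKernel P i j k x y _ rfl,
      hXxXy n k x y hx hy, Xx_Xy_polyKernel]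
    simp only [hpoly, hzm]
    exact (hb.abs_thirdForm_offDiag_le hm hij hjn hin hk).trans hthird
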